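/- Let p ≥ 1 and let ν be a probability measure on 𝕋 with a density (still denoted ν) with respect to λ satisfying |ν(x)−ν(y)| ≤ A d(x,y)^a for all x,y, with a ∈ (0,1], A > 0. Define ã(p) := 1 if p = 1 or p ≥ 3/2, and ã(p) := 2(p−1) if p ∈ (1, 3/2). Then there exist a constant c₃ > 0, depending only on p and A, and a constant σ̃ ∈ (0, 1/2), depending only on p, such that for every α > 0 and β ≥ 1 with αβ² ≤ σ̃, and for every f ∈ C²(𝕋), ∫_𝕋 L_{α,β}[f − 1]·(f − 1) dμ_β ≤ −(1/2 − c₃ α^{ã(p)} β³) ∫_𝕋 (f')² dμ_β + c₃ α^{ã(p)} β³ ∫_𝕋 (f − 1)² dμ_β. -/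

import Mathlib

open MeasureTheory Real Set Filter

noncomputable section

instance : Fact (0 < 2 * π) := ⟨Real.two_pi_pos⟩

/-- The circle `𝕋 = ℝ/(2πℤ)`. -/
abbrev 𝕋 : Type := AddCircle (2 * π)

/-- The normalized Haar probability measure `λ` on the circle. -/
def lam : Measure 𝕋 := (ENNReal.ofReal (2 * π))⁻¹ • volume

/-- The representative of a point of the circle in `(-π, π]`. -/
def rep (z : 𝕋) : ℝ := ((AddCircle.equivIoc (2 * π) (-π) z : Set.Ioc (-π) (-π + 2 * π)) : ℝ)

/-- `σ(x,y) = +1` if the representative of `y - x` lies in `[0, π]`, `-1` otherwise. -/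
def sgn (x y : 𝕋) : ℝ := if 0 ≤ rep (y - x) then 1 else -1

/-- The potential `U_p(x) = ∫ d(x,y)^p ν(dy)`. -/
def Up (p : ℝ) (ν : Measure 𝕋) (x : 𝕋) : ℝ := ∫ y, dist x y ^ p ∂ν

/-- The normalizing constant `Z_β = ∫ exp(-β U_p) dλ`. -/
def Zp (p : ℝ) (ν : Measure 𝕋) (β : ℝ) : ℝ := ∫ x, Real.exp (-β * Up p ν x) ∂lam

/-- The Gibbs measure `μ_β` with density `exp(-β U_p)/Z_β` w.r.t. `λ`. -/
def gibbsp (p : ℝ) (ν : Measure 𝕋) (β : ℝ) : Measure 𝕋 :=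
  lam.withDensity fun x => ENNReal.ofReal (Real.exp (-β * Up p ν x) / Zp p ν β)

/-- The generator, acting on (the periodic lift) `φ` of a `C²` function on `𝕋`:
`L_{α,β}φ(x) = ½ φ''(x) + α⁻¹ ∫ [φ(x + (p/2)αβ d(x,y)^{p-1} σ(x,y)) - φ(x)] ν(dy)`. -/
def genp (p : ℝ) (ν : Measure 𝕋) (α β : ℝ) (φ : ℝ → ℝ) (z : 𝕋) : ℝ :=
  (1 / 2) * deriv (deriv φ) (rep z)
    + α⁻¹ * ∫ y, (φ (rep z + p / 2 * α * β * dist z y ^ (p - 1) * sgn z y) - φ (rep z)) ∂ν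

/-- The exponent `ã(p)`: `1` if `p = 1` or `p ≥ 3/2`, and `2(p-1)` if `p ∈ (1, 3/2)`. -/
def ta (p : ℝ) : ℝ := if p = 1 ∨ 3 / 2 ≤ p then 1 else 2 * (p - 1)

/-!
Write `φ = -β U_p` and lift everything to `2π`-periodic functions on the line. The first-order part
of the jumps of `L_{α,β}` is the drift `φ' / 2`, so `L_{α,β} h = ½ e^{-φ} (e^φ h')' + α⁻¹ R h`,
where `R h` averages the first-order Taylor remainders of `h` along the jumps. The first term
contributes exactly `-½ ∫ (h')² e^φ`.

The jumps have length `s = O(αβ)`, so the error should be of order `α⁻¹ s²`, but the obvious bound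
on the remainder costs `h''`. Instead, take the target `y` towards which the process jumps as the
outer variable, so that the density becomes a bounded factor of `y` alone, and integrate by parts in
the distance `w = y - x`. This trades the Taylor remainder of `h` for the increment of `h`, weighted
by the derivative of the jump length, and for the Taylor remainder of a primitive of `h`. Both are
quadratic in `s` and controlled by `∫ ((h')² + h²) e^φ`. The derivative of the jump length is only
integrable when `1 < p < 2`, but it is nonnegative with integral at most `s`, which suffices and
gives the error `O(α β² (1 + β))` for every `p ≥ 1`.
-/

/-! ### Periodic functions and parametric integrals -/

theorem integral_comp_add_of_periodic {f : ℝ → ℝ} {T : ℝ} (hf : Function.Periodic f T) (v : ℝ) :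
    ∫ x in (0 : ℝ)..T, f (x + v) = ∫ x in (0 : ℝ)..T, f x := by
  rw [intervalIntegral.integral_comp_add_right, zero_add, add_comm T v,
    hf.intervalIntegral_add_eq v 0, zero_add]

theorem integral_comp_neg_of_periodic {f : ℝ → ℝ} {T : ℝ} (hf : Function.Periodic f T) :
    ∫ x in (0 : ℝ)..T, f (-x) = ∫ x in (0 : ℝ)..T, f x := by
  have h := hf.intervalIntegral_add_eq (-T) 0
  rw [intervalIntegral.integral_comp_neg, neg_zero]
  simpa only [neg_add_cancel, zero_add] using h

section Fubini

variable {k : ℝ → ℝ} {Φ : ℝ → ℝ → ℝ} {c d : ℝ}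

theorem integrableOn_kernel_mul (hk : IntervalIntegrable k volume c d)
    (hΦ : Continuous (Function.uncurry Φ)) (a b : ℝ) :
    IntegrableOn (Function.uncurry fun x w => k w * Φ x w) (uIoc a b ×ˢ uIoc c d) := by
  obtain ⟨M, hM⟩ := (isCompact_uIcc.prod isCompact_uIcc).exists_bound_of_continuousOn
    (s := uIcc a b ×ˢ uIcc c d) hΦ.continuousOn
  have : IsFiniteMeasure (volume.restrict (uIoc a b)) := isFiniteMeasure_restrict_Ioc _ _
  have hk' : Integrable (fun z : ℝ × ℝ => k z.2)
      ((volume.restrict (uIoc a b)).prod (volume.restrict (uIoc c d))) :=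
    hk.def'.comp_snd _
  rw [Measure.prod_restrict] at hk'
  refine hk'.mul_bdd hΦ.aestronglyMeasurable (c := M) ?_
  refine ae_restrict_of_forall_mem (measurableSet_uIoc.prod measurableSet_uIoc) fun z hz => ?_
  exact hM z ⟨uIoc_subset_uIcc hz.1, uIoc_subset_uIcc hz.2⟩

theorem integral_integral_kernel_mul (hk : IntervalIntegrable k volume c d)
    (hΦ : Continuous (Function.uncurry Φ)) (a b : ℝ) :
    ∫ x in a..b, ∫ w in c..d, k w * Φ x w = ∫ w in c..d, k w * ∫ x in a..b, Φ x w := by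
  rw [intervalIntegral_intervalIntegral_swap (integrableOn_kernel_mul hk hΦ a b)]
  simp only [intervalIntegral.integral_const_mul]

theorem intervalIntegrable_integral_kernel_mul (hk : IntervalIntegrable k volume c d)
    (hΦ : Continuous (Function.uncurry Φ)) (a b : ℝ) :
    IntervalIntegrable (fun x => ∫ w in c..d, k w * Φ x w) volume a b := by
  have h := integrableOn_kernel_mul hk hΦ a b
  rw [IntegrableOn, Measure.volume_eq_prod, ← Measure.prod_restrict] at h
  simp only [intervalIntegral.intervalIntegral_eq_integral_uIoc]
  exact intervalIntegrable_iff.2 (h.integral_prod_left.smul (if c ≤ d then 1 else -1 : ℝ))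

theorem integral_integral_kernel_mul_comp_sub {T : ℝ} (hk : IntervalIntegrable k volume c d)
    (hΦ : Continuous (Function.uncurry Φ)) (hT : ∀ w, Function.Periodic (Φ · w) T) :
    ∫ y in (0 : ℝ)..T, ∫ w in c..d, k w * Φ (y - w) w =
      ∫ w in c..d, k w * ∫ x in (0 : ℝ)..T, Φ x w := by
  have hΦ' : Continuous (Function.uncurry fun y w => Φ (y - w) w) :=
    hΦ.comp ((continuous_fst.sub continuous_snd).prodMk continuous_snd)
  rw [integral_integral_kernel_mul hk hΦ']
  congr with w
  rw [← integral_comp_add_of_periodic (hT w) (-w)]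
  simp only [sub_eq_add_neg]

theorem integral_integral_mul_comp_add_mul {K : ℝ → ℝ → ℝ} {F γ : ℝ → ℝ} {T : ℝ} (L : ℝ)
    (hK : Continuous (Function.uncurry K)) (hKT : ∀ w, Function.Periodic (K · w) T)
    (hF : Continuous F) (hFT : Function.Periodic F T) (hγ : Continuous γ)
    (hγT : Function.Periodic γ T) :
    ∫ x in (0 : ℝ)..T, (∫ w in (0 : ℝ)..L, K x w * γ (x + w)) * F x =
      ∫ y in (0 : ℝ)..T, (∫ w in (0 : ℝ)..L, K (y - w) w * F (y - w)) * γ y := by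
  set Θ : ℝ → ℝ → ℝ := fun x w => K x w * F x * γ (x + w)
  have hΘ : Continuous (Function.uncurry Θ) :=
    (hK.mul (hF.comp continuous_fst)).mul (hγ.comp continuous_add)
  have hΘT : ∀ w, Function.Periodic (Θ · w) T := fun w x => by
    simp only [Θ, add_right_comm x T, (hKT w) x, hFT x, hγT (x + w)]
  have hone := intervalIntegrable_const (c := (1 : ℝ)) (a := 0) (b := L) (μ := volume)
  have hswap := (integral_integral_kernel_mul hone hΘ 0 T).trans
    (integral_integral_kernel_mul_comp_sub hone hΘ hΘT).symm
  simp only [one_mul, Θ, sub_add_cancel] at hswap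
  simp only [← intervalIntegral.integral_mul_const, mul_right_comm _ (γ _), hswap]

end Fubini

theorem integral_symm_eq_add {f f₁ f₂ : ℝ → ℝ} {L : ℝ} (hL : 0 ≤ L)
    (hf₁ : IntervalIntegrable f₁ volume 0 L) (hf₂ : IntervalIntegrable f₂ volume 0 L)
    (h₁ : ∀ w ∈ Ioo 0 L, f w = f₁ w) (h₂ : ∀ w ∈ Ioo 0 L, f (-w) = f₂ w) :
    ∫ w in -L..L, f w = ∫ w in (0 : ℝ)..L, (f₁ w + f₂ w) := by
  rw [← uIoo_of_le hL] at h₁ h₂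
  have hpos : IntervalIntegrable f volume 0 L := hf₁.congr_uIoo fun w hw => (h₁ w hw).symm
  have hneg : IntervalIntegrable (fun w => f (-w)) volume 0 L :=
    hf₂.congr_uIoo fun w hw => (h₂ w hw).symm
  have hneg' : IntervalIntegrable f volume (-L) 0 := by
    simpa using (hneg.comp_sub_left 0).symm
  rw [← intervalIntegral.integral_add_adjacent_intervals hneg' hpos,
    intervalIntegral.integral_add hf₁ hf₂, add_comm,
    intervalIntegral.integral_congr_uIoo h₁]
  congr 1
  rw [← intervalIntegral.integral_congr_uIoo h₂, intervalIntegral.integral_comp_neg, neg_zero]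

/-! ### Taylor remainders in weighted Sobolev norm -/

theorem continuous_integral_of_continuous {Ψ : ℝ → ℝ → ℝ} (hΨ : Continuous (Function.uncurry Ψ))
    (c d : ℝ) : Continuous fun x => ∫ w in c..d, Ψ x w :=
  intervalIntegral.continuous_parametric_intervalIntegral_of_continuous' hΨ c d

theorem integral_abs_integral_mul_le {Ψ : ℝ → ℝ → ℝ} {ω : ℝ → ℝ} {T s C : ℝ} (hT : 0 ≤ T)
    (hs : 0 ≤ s) (hΨ : Continuous (Function.uncurry Ψ)) (hω : Continuous ω) (hω₀ : ∀ x, 0 ≤ ω x)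
    (hC : ∀ v ∈ Icc 0 s, ∫ x in (0 : ℝ)..T, |Ψ x v| * ω x ≤ C) :
    ∫ x in (0 : ℝ)..T, |∫ v in (0 : ℝ)..s, Ψ x v| * ω x ≤ s * C := by
  have hΨω : Continuous (Function.uncurry fun x v => |Ψ x v| * ω x) :=
    hΨ.abs.mul (hω.comp continuous_fst)
  have hpt : ∀ x ∈ Icc 0 T,
      |∫ v in (0 : ℝ)..s, Ψ x v| * ω x ≤ ∫ v in (0 : ℝ)..s, |Ψ x v| * ω x := fun x _ => by
    rw [intervalIntegral.integral_mul_const]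
    exact mul_le_mul_of_nonneg_right (intervalIntegral.abs_integral_le_integral_abs hs) (hω₀ x)
  have hswap := integral_integral_kernel_mul (intervalIntegrable_const (c := (1 : ℝ)) (a := 0)
    (b := s)) hΨω 0 T
  simp only [one_mul] at hswap
  calc ∫ x in (0 : ℝ)..T, |∫ v in (0 : ℝ)..s, Ψ x v| * ω x
      ≤ ∫ x in (0 : ℝ)..T, ∫ v in (0 : ℝ)..s, |Ψ x v| * ω x :=
        intervalIntegral.integral_mono_on hT
          (((continuous_integral_of_continuous hΨ 0 s).abs.mul hω).intervalIntegrable _ _)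
          ((continuous_integral_of_continuous hΨω 0 s).intervalIntegrable _ _) hpt
    _ = ∫ v in (0 : ℝ)..s, ∫ x in (0 : ℝ)..T, |Ψ x v| * ω x := hswap
    _ ≤ ∫ _ in (0 : ℝ)..s, C :=
        intervalIntegral.integral_mono_on hs
          ((continuous_integral_of_continuous (Ψ := fun v x => |Ψ x v| * ω x)
            (hΨω.comp continuous_swap) 0 T).intervalIntegrable _ _) intervalIntegrable_const hC
    _ = s * C := by rw [intervalIntegral.integral_const, sub_zero, smul_eq_mul]

/-- The integrand of the weighted Sobolev norm `∫ (h'² + h²) e^φ`, which dominates every error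
term of the estimate. -/
def sobolevDensity (h φ : ℝ → ℝ) (x : ℝ) : ℝ := (deriv h x ^ 2 + h x ^ 2) * exp (φ x)

/-- The first-order Taylor remainder of `f` at `x` for the increment `s`. -/
def taylorRemainder (f : ℝ → ℝ) (x s : ℝ) : ℝ := f (x + s) - f x - s * deriv f x

theorem periodic_deriv {f : ℝ → ℝ} {T : ℝ} (hf : Function.Periodic f T) :
    Function.Periodic (deriv f) T := fun x => by
  rw [← deriv_comp_add_const, funext hf]

section WeightedEstimates

variable {h φ k P : ℝ → ℝ} {T b M s S : ℝ}

theorem sobolevDensity_nonneg (h φ : ℝ → ℝ) (x : ℝ) : 0 ≤ sobolevDensity h φ x := by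
  unfold sobolevDensity; positivity

theorem integral_sobolevDensity_nonneg (hT : 0 ≤ T) (h φ : ℝ → ℝ) :
    0 ≤ ∫ x in (0 : ℝ)..T, sobolevDensity h φ x :=
  intervalIntegral.integral_nonneg hT fun x _ => sobolevDensity_nonneg h φ x

theorem continuous_sobolevDensity (hh : ContDiff ℝ 1 h) (hφ : Continuous φ) :
    Continuous (sobolevDensity h φ) :=
  ((hh.continuous_deriv_one.pow 2).add (hh.continuous.pow 2)).mul hφ.rexp

theorem sobolevDensity_periodic (hhT : Function.Periodic h T) (hφT : Function.Periodic φ T) :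
    Function.Periodic (sobolevDensity h φ) T := fun x => by
  simp only [sobolevDensity, periodic_deriv hhT x, hhT x, hφT x]

theorem exp_le_exp_mul_exp_comp_add (hφ : Differentiable ℝ φ) (hb : ∀ x, |deriv φ x| ≤ b)
    (x v : ℝ) : exp (φ x) ≤ exp (b * |v|) * exp (φ (x + v)) := by
  have hlip : |φ x - φ (x + v)| ≤ b * |x - (x + v)| :=
    convex_univ.norm_image_sub_le_of_norm_deriv_le (fun z _ => hφ z) (fun z _ => hb z)
      (mem_univ _) (mem_univ _)
  rw [sub_add_cancel_left, abs_neg] at hlip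
  rw [← exp_add, exp_le_exp]
  linarith [le_abs_self (φ x - φ (x + v))]

theorem abs_deriv_comp_add_mul_le (hφ : Differentiable ℝ φ) (hb : ∀ x, |deriv φ x| ≤ b)
    (hM : 0 ≤ M) (hk : ∀ x, k x ^ 2 ≤ M ^ 2 * (deriv h x ^ 2 + h x ^ 2)) (x v : ℝ) :
    |deriv h (x + v)| * (|k x| * exp (φ x)) ≤
      M * exp (b * |v|) / 2 * (sobolevDensity h φ (x + v) + sobolevDensity h φ x) := by
  set n := deriv h x ^ 2 + h x ^ 2
  set d := deriv h (x + v)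
  have hn₀ : 0 ≤ n := by positivity
  have hb₀ : 0 ≤ b := (abs_nonneg _).trans (hb 0)
  have hyoung : |d| * |k x| ≤ M / 2 * (d ^ 2 + n) := by
    rw [← abs_mul]
    refine abs_le_of_sq_le_sq ?_ (by positivity)
    nlinarith [mul_le_mul_of_nonneg_left (hk x) (sq_nonneg d),
      mul_nonneg (sq_nonneg M) (sq_nonneg (d ^ 2 - n))]
  have hshift : d ^ 2 * exp (φ x) ≤ exp (b * |v|) * sobolevDensity h φ (x + v) := by
    have := mul_le_mul_of_nonneg_left (exp_le_exp_mul_exp_comp_add hφ hb x v) (sq_nonneg d)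
    have hh : 0 ≤ exp (b * |v|) * (h (x + v) ^ 2 * exp (φ (x + v))) := by positivity
    unfold sobolevDensity
    linarith
  have hself : n * exp (φ x) ≤ exp (b * |v|) * sobolevDensity h φ x :=
    le_mul_of_one_le_left (sobolevDensity_nonneg h φ x) (one_le_exp (by positivity))
  calc |d| * (|k x| * exp (φ x)) = |d| * |k x| * exp (φ x) := by ring
    _ ≤ M / 2 * (d ^ 2 + n) * exp (φ x) := by gcongr
    _ = M / 2 * (d ^ 2 * exp (φ x) + n * exp (φ x)) := by ring
    _ ≤ M / 2 * (exp (b * |v|) * sobolevDensity h φ (x + v)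
          + exp (b * |v|) * sobolevDensity h φ x) := by gcongr
    _ = _ := by ring

theorem integral_deriv_comp_add (hh : ContDiff ℝ 1 h) (x s : ℝ) :
    ∫ v in (0 : ℝ)..s, deriv h (x + v) = h (x + s) - h x := by
  rw [intervalIntegral.integral_comp_add_left, add_zero]
  exact intervalIntegral.integral_deriv_eq_sub (fun z _ => hh.differentiable one_ne_zero z)
    (hh.continuous_deriv_one.intervalIntegrable _ _)

theorem contDiff_one_of_hasDerivAt (hP : ∀ x, HasDerivAt P (h x) x) (hh : Continuous h) :
    ContDiff ℝ 1 P :=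
  contDiff_one_iff_deriv.2
    ⟨fun x => (hP x).differentiableAt, (funext fun x => (hP x).deriv : deriv P = h) ▸ hh⟩

theorem taylorRemainder_eq_integral (hP : ∀ x, HasDerivAt P (h x) x)
    (hh : Continuous h) (x s : ℝ) :
    taylorRemainder P x s = ∫ v in (0 : ℝ)..s, (h (x + v) - h x) := by
  have hshift : Continuous fun v => h (x + v) := hh.comp (continuous_const_add x)
  rw [intervalIntegral.integral_sub (hshift.intervalIntegrable _ _) intervalIntegrable_const,
    intervalIntegral.integral_comp_add_left, add_zero, intervalIntegral.integral_const,
    intervalIntegral.integral_eq_sub_of_hasDerivAt (fun z _ => hP z)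
      (hh.intervalIntegrable _ _), taylorRemainder, (hP x).deriv, sub_zero, smul_eq_mul]

theorem taylorRemainder_periodic (hP : ∀ x, HasDerivAt P (h x) x) (hh : Continuous h)
    (hhT : Function.Periodic h T) (v : ℝ) :
    Function.Periodic (taylorRemainder P · v) T := fun x => by
  simp only [taylorRemainder_eq_integral hP hh, add_right_comm x T, hhT _]

variable (hT : 0 ≤ T) (hh : ContDiff ℝ 1 h) (hhT : Function.Periodic h T)
  (hφ : Differentiable ℝ φ) (hφT : Function.Periodic φ T) (hb : ∀ x, |deriv φ x| ≤ b)
  (hk_cont : Continuous k) (hM : 0 ≤ M) (hk : ∀ x, k x ^ 2 ≤ M ^ 2 * (deriv h x ^ 2 + h x ^ 2))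
include hT hh hhT hφ hφT hb hk_cont hM hk

theorem integral_abs_deriv_comp_add_mul_le (v : ℝ) :
    ∫ x in (0 : ℝ)..T, |deriv h (x + v)| * (|k x| * exp (φ x)) ≤
      M * exp (b * |v|) * ∫ x in (0 : ℝ)..T, sobolevDensity h φ x := by
  have hN := continuous_sobolevDensity hh hφ.continuous
  have hN_shift : Continuous fun x => sobolevDensity h φ (x + v) := hN.comp (continuous_add_const v)
  have hleft : Continuous fun x => |deriv h (x + v)| * (|k x| * exp (φ x)) :=
    (hh.continuous_deriv_one.comp (continuous_add_const v)).abs.mul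
      (hk_cont.abs.mul hφ.continuous.rexp)
  calc ∫ x in (0 : ℝ)..T, |deriv h (x + v)| * (|k x| * exp (φ x))
      ≤ ∫ x in (0 : ℝ)..T, M * exp (b * |v|) / 2 *
          (sobolevDensity h φ (x + v) + sobolevDensity h φ x) :=
        intervalIntegral.integral_mono_on hT (hleft.intervalIntegrable _ _)
          ((continuous_const.mul (hN_shift.add hN)).intervalIntegrable _ _)
          fun x _ => abs_deriv_comp_add_mul_le hφ hb hM hk x v
    _ = M * exp (b * |v|) * ∫ x in (0 : ℝ)..T, sobolevDensity h φ x := by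
        rw [intervalIntegral.integral_const_mul, intervalIntegral.integral_add
          (hN_shift.intervalIntegrable _ _) (hN.intervalIntegrable _ _),
          integral_comp_add_of_periodic (sobolevDensity_periodic hhT hφT)]
        ring

theorem integral_abs_increment_mul_le (hs : s ∈ Icc 0 S) :
    ∫ x in (0 : ℝ)..T, |h (x + s) - h x| * (|k x| * exp (φ x)) ≤
      S * (M * exp (b * S) * ∫ x in (0 : ℝ)..T, sobolevDensity h φ x) := by
  have hb₀ : 0 ≤ b := (abs_nonneg _).trans (hb 0)
  have hE := integral_sobolevDensity_nonneg hT h φ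
  simp only [← integral_deriv_comp_add hh]
  refine (integral_abs_integral_mul_le (Ψ := fun x v => deriv h (x + v))
    (ω := fun x => |k x| * exp (φ x)) hT hs.1 (hh.continuous_deriv_one.comp continuous_add)
    (hk_cont.abs.mul hφ.continuous.rexp) (fun x => by positivity) fun v hv => ?_).trans
    (mul_le_mul_of_nonneg_right hs.2 (by positivity))
  refine (integral_abs_deriv_comp_add_mul_le hT hh hhT hφ hφT hb hk_cont hM hk v).trans ?_
  rw [abs_of_nonneg hv.1]
  have := hv.2.trans hs.2
  gcongr

theorem integral_abs_taylorRemainder_mul_le (hP : ∀ x, HasDerivAt P (h x) x) (hs : s ∈ Icc 0 S) :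
    ∫ x in (0 : ℝ)..T, |taylorRemainder P x s| * (|k x| * exp (φ x)) ≤
      S * (S * (M * exp (b * S) * ∫ x in (0 : ℝ)..T, sobolevDensity h φ x)) := by
  have hE := integral_sobolevDensity_nonneg hT h φ
  have hS := hs.1.trans hs.2
  simp only [taylorRemainder_eq_integral hP hh.continuous]
  exact (integral_abs_integral_mul_le (Ψ := fun x v => h (x + v) - h x)
    (ω := fun x => |k x| * exp (φ x)) hT hs.1
    ((hh.continuous.comp continuous_add).sub (hh.continuous.comp continuous_fst))
    (hk_cont.abs.mul hφ.continuous.rexp) (fun x => by positivity) fun v hv =>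
      integral_abs_increment_mul_le hT hh hhT hφ hφT hb hk_cont hM hk ⟨hv.1, hv.2.trans hs.2⟩).trans
    (mul_le_mul_of_nonneg_right hs.2 (by positivity))

theorem integral_abs_taylorRemainder_mul_comp_sub_le (hP : ∀ x, HasDerivAt P (h x) x)
    (hkT : Function.Periodic k T) (hs : s ∈ Icc 0 S) (w : ℝ) :
    ∫ y in (0 : ℝ)..T, |taylorRemainder P (y - w) s| * (|k (y - w)| * exp (φ (y - w))) ≤
      S * (S * (M * exp (b * S) * ∫ x in (0 : ℝ)..T, sobolevDensity h φ x)) := by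
  have hper : Function.Periodic (fun x => |taylorRemainder P x s| * (|k x| * exp (φ x))) T :=
    fun x => by simp only [taylorRemainder_periodic hP hh.continuous hhT _ x, hkT x, hφT x]
  have hshift := integral_comp_add_of_periodic hper (-w)
  simp only [← sub_eq_add_neg] at hshift
  exact hshift.trans_le
    (integral_abs_taylorRemainder_mul_le hT hh hhT hφ hφT hb hk_cont hM hk hP hs)

end WeightedEstimates

/-! ### Integration by parts in the jump length -/

theorem integral_kernel_mul_comp_sub_le {k : ℝ → ℝ} {Φ : ℝ → ℝ → ℝ} {T L C : ℝ} (hL : 0 ≤ L)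
    (hk : IntervalIntegrable k volume 0 L) (hk₀ : ∀ w ∈ Ioo 0 L, 0 ≤ k w)
    (hΦ : Continuous (Function.uncurry Φ)) (hT : ∀ w, Function.Periodic (Φ · w) T)
    (hC : ∀ w ∈ Icc 0 L, ∫ x in (0 : ℝ)..T, Φ x w ≤ C) :
    ∫ y in (0 : ℝ)..T, ∫ w in (0 : ℝ)..L, k w * Φ (y - w) w ≤
      (∫ w in (0 : ℝ)..L, k w) * C := by
  rw [integral_integral_kernel_mul_comp_sub hk hΦ hT, ← intervalIntegral.integral_mul_const]
  refine intervalIntegral.integral_mono_on_of_le_Ioo hL (hk.mul_continuousOn ?_)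
    (hk.mul_const C) fun w hw =>
      mul_le_mul_of_nonneg_left (hC w (Ioo_subset_Icc_self hw)) (hk₀ w hw)
  exact (continuous_integral_of_continuous (Ψ := fun w x => Φ x w)
    (hΦ.comp continuous_swap) 0 T).continuousOn

section JumpLength

variable {h P F s : ℝ → ℝ} {L : ℝ}

-- For a fixed target `y`, varying the distance `w` moves the starting point `y - w`, so the
-- remainder of the primitive `P` differentiates to that of `h`.
theorem hasDerivAt_taylorRemainder_comp_sub (hP : ∀ x, HasDerivAt P (h x) x)
    (hh : Differentiable ℝ h) {w : ℝ} (hs : DifferentiableAt ℝ s w) (y : ℝ) :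
    HasDerivAt (fun w => taylorRemainder P (y - w) (s w))
      (deriv s w * (h (y - w + s w) - h (y - w)) - taylorRemainder h (y - w) (s w)) w := by
  have hsub : HasDerivAt (fun w => y - w) (-1) w := (hasDerivAt_id w).const_sub y
  have hP' : deriv P = h := funext fun x => (hP x).deriv
  have hshift := (hP (y - w + s w)).comp w (hsub.add hs.hasDerivAt)
  have hbase := (hP (y - w)).comp w hsub
  have hlin := hs.hasDerivAt.mul ((hh (y - w)).hasDerivAt.comp w hsub)
  simp only [taylorRemainder, hP']
  refine ((hshift.sub hbase).sub hlin).congr_deriv ?_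
  simp only [Function.comp_apply]
  ring

theorem hasDerivAt_taylorRemainder_mul_comp_sub (hP : ∀ x, HasDerivAt P (h x) x)
    (hh : Differentiable ℝ h) (hF : Differentiable ℝ F) {w : ℝ} (hs : DifferentiableAt ℝ s w)
    (y : ℝ) :
    HasDerivAt (fun w => taylorRemainder P (y - w) (s w) * F (y - w))
      (deriv s w * ((h (y - w + s w) - h (y - w)) * F (y - w))
        - taylorRemainder h (y - w) (s w) * F (y - w)
        - taylorRemainder P (y - w) (s w) * deriv F (y - w)) w := by
  have hFw := (hF (y - w)).hasDerivAt.comp w ((hasDerivAt_id w).const_sub y)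
  refine ((hasDerivAt_taylorRemainder_comp_sub hP hh hs y).mul hFw).congr_deriv ?_
  simp only [Function.comp_apply]
  ring

theorem continuous_taylorRemainder_comp (hh : ContDiff ℝ 1 h) (hs : Continuous s) :
    Continuous (Function.uncurry fun x w => taylorRemainder h x (s w)) := by
  have hh' := hh.continuous_deriv_one
  have hh₀ := hh.continuous
  unfold taylorRemainder Function.uncurry
  fun_prop

theorem integral_taylorRemainder_mul_eq (hP : ∀ x, HasDerivAt P (h x) x) (hh : ContDiff ℝ 1 h)
    (hF : ContDiff ℝ 1 F) (hL : 0 ≤ L) (hs : Continuous s)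
    (hs_diff : DifferentiableOn ℝ s (Ioo 0 L)) (hs_mono : MonotoneOn s (Icc 0 L)) (y : ℝ) :
    ∫ w in (0 : ℝ)..L, taylorRemainder h (y - w) (s w) * F (y - w) =
      (∫ w in (0 : ℝ)..L, deriv s w * ((h (y - w + s w) - h (y - w)) * F (y - w)))
        - (∫ w in (0 : ℝ)..L, taylorRemainder P (y - w) (s w) * deriv F (y - w))
        - (taylorRemainder P (y - L) (s L) * F (y - L) - taylorRemainder P y (s 0) * F y) := by
  have hP₁ := contDiff_one_of_hasDerivAt hP hh.continuous
  have hsub : Continuous fun w : ℝ => y - w := continuous_const.sub continuous_id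
  have hF₀ : Continuous fun w => F (y - w) := hF.continuous.comp hsub
  have hF' : Continuous fun w => deriv F (y - w) := hF.continuous_deriv_one.comp hsub
  have hRh : Continuous fun w => taylorRemainder h (y - w) (s w) :=
    (continuous_taylorRemainder_comp hh hs).comp (hsub.prodMk continuous_id)
  have hRP : Continuous fun w => taylorRemainder P (y - w) (s w) :=
    (continuous_taylorRemainder_comp hP₁ hs).comp (hsub.prodMk continuous_id)
  have hinc : Continuous fun w => (h (y - w + s w) - h (y - w)) * F (y - w) :=
    ((hh.continuous.comp (hsub.add hs)).sub (hh.continuous.comp hsub)).mul hF₀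
  have hJ : IntervalIntegrable (fun w => deriv s w * ((h (y - w + s w) - h (y - w)) * F (y - w)))
      volume 0 L :=
    (MonotoneOn.intervalIntegrable_deriv (uIcc_of_le hL ▸ hs_mono)).mul_continuousOn
      hinc.continuousOn
  have hR : IntervalIntegrable (fun w => taylorRemainder h (y - w) (s w) * F (y - w))
      volume 0 L := (hRh.mul hF₀).intervalIntegrable _ _
  have hK : IntervalIntegrable (fun w => taylorRemainder P (y - w) (s w) * deriv F (y - w))
      volume 0 L := (hRP.mul hF').intervalIntegrable _ _
  have hftc := intervalIntegral.integral_eq_sub_of_hasDerivAt_of_le hL (hRP.mul hF₀).continuousOn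
    (fun w hw => hasDerivAt_taylorRemainder_mul_comp_sub hP (hh.differentiable one_ne_zero)
      (hF.differentiable one_ne_zero) (hs_diff.differentiableAt (isOpen_Ioo.mem_nhds hw)) y)
    ((hJ.sub hR).sub hK)
  rw [intervalIntegral.integral_sub (hJ.sub hR) hK, intervalIntegral.integral_sub hJ hR]
    at hftc
  simp only [Pi.mul_apply, sub_zero] at hftc
  linarith

theorem deriv_nonneg_of_monotoneOn_Icc (hs_mono : MonotoneOn s (Icc 0 L)) {w : ℝ}
    (hw : w ∈ Ioo 0 L) : 0 ≤ deriv s w := by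
  rw [← derivWithin_of_isOpen isOpen_Ioo hw]
  exact (hs_mono.mono Ioo_subset_Icc_self).derivWithin_nonneg

theorem abs_integral_taylorRemainder_mul_le (hP : ∀ x, HasDerivAt P (h x) x)
    (hh : ContDiff ℝ 1 h) (hF : ContDiff ℝ 1 F) (hL : 0 ≤ L) (hs : Continuous s)
    (hs_diff : DifferentiableOn ℝ s (Ioo 0 L)) (hs_mono : MonotoneOn s (Icc 0 L)) (y : ℝ) :
    |∫ w in (0 : ℝ)..L, taylorRemainder h (y - w) (s w) * F (y - w)| ≤
      (∫ w in (0 : ℝ)..L, deriv s w * (|h (y - w + s w) - h (y - w)| * |F (y - w)|))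
        + (∫ w in (0 : ℝ)..L, |taylorRemainder P (y - w) (s w)| * |deriv F (y - w)|)
        + |taylorRemainder P (y - L) (s L)| * |F (y - L)|
        + |taylorRemainder P y (s 0)| * |F y| := by
  have hJ : |∫ w in (0 : ℝ)..L, deriv s w * ((h (y - w + s w) - h (y - w)) * F (y - w))| ≤
      ∫ w in (0 : ℝ)..L, deriv s w * (|h (y - w + s w) - h (y - w)| * |F (y - w)|) := by
    refine (intervalIntegral.abs_integral_le_integral_abs hL).trans_eq
      (intervalIntegral.integral_congr_uIoo fun w hw => ?_)
    rw [uIoo_of_le hL] at hw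
    simp only [abs_mul, abs_of_nonneg (deriv_nonneg_of_monotoneOn_Icc hs_mono hw)]
  have hK : |∫ w in (0 : ℝ)..L, taylorRemainder P (y - w) (s w) * deriv F (y - w)| ≤
      ∫ w in (0 : ℝ)..L, |taylorRemainder P (y - w) (s w)| * |deriv F (y - w)| := by
    simp only [← abs_mul]
    exact intervalIntegral.abs_integral_le_integral_abs hL
  rw [integral_taylorRemainder_mul_eq hP hh hF hL hs hs_diff hs_mono]
  simp only [← abs_mul] at hJ hK ⊢
  refine (abs_sub _ _).trans ?_
  have h₁ := abs_sub (∫ w in (0 : ℝ)..L, deriv s w * ((h (y - w + s w) - h (y - w)) * F (y - w)))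
    (∫ w in (0 : ℝ)..L, taylorRemainder P (y - w) (s w) * deriv F (y - w))
  have h₂ := abs_sub (taylorRemainder P (y - L) (s L) * F (y - L))
    (taylorRemainder P y (s 0) * F y)
  linarith

theorem integral_abs_integral_taylorRemainder_mul_le (hP : ∀ x, HasDerivAt P (h x) x)
    (hh : ContDiff ℝ 1 h) (hF : ContDiff ℝ 1 F) (hL : 0 ≤ L) (hs : Continuous s)
    (hs_diff : DifferentiableOn ℝ s (Ioo 0 L)) (hs_mono : MonotoneOn s (Icc 0 L)) {T : ℝ}
    (hT : 0 ≤ T) :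
    ∫ y in (0 : ℝ)..T, |∫ w in (0 : ℝ)..L, taylorRemainder h (y - w) (s w) * F (y - w)| ≤
      (∫ y in (0 : ℝ)..T, ∫ w in (0 : ℝ)..L,
          deriv s w * (|h (y - w + s w) - h (y - w)| * |F (y - w)|))
        + (∫ y in (0 : ℝ)..T, ∫ w in (0 : ℝ)..L,
          |taylorRemainder P (y - w) (s w)| * |deriv F (y - w)|)
        + (∫ y in (0 : ℝ)..T, |taylorRemainder P (y - L) (s L)| * |F (y - L)|)
        + ∫ y in (0 : ℝ)..T, |taylorRemainder P y (s 0)| * |F y| := by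
  have hP₁ := contDiff_one_of_hasDerivAt hP hh.continuous
  have hh₀ := hh.continuous
  have hF₀ := hF.continuous
  have hF' := hF.continuous_deriv_one
  have hsub : Continuous fun z : ℝ × ℝ => (z.1 - z.2, z.2) := by fun_prop
  have hRh := (continuous_taylorRemainder_comp hh hs).comp hsub
  have hRP := (continuous_taylorRemainder_comp hP₁ hs).comp hsub
  have hR : Continuous fun y =>
      |∫ w in (0 : ℝ)..L, taylorRemainder h (y - w) (s w) * F (y - w)| :=
    (continuous_integral_of_continuous
      (Ψ := fun y w => taylorRemainder h (y - w) (s w) * F (y - w))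
      (hRh.mul (hF₀.comp continuous_sub)) 0 L).abs
  have hJ : IntervalIntegrable (fun y => ∫ w in (0 : ℝ)..L,
      deriv s w * (|h (y - w + s w) - h (y - w)| * |F (y - w)|)) volume 0 T :=
    intervalIntegrable_integral_kernel_mul
      (MonotoneOn.intervalIntegrable_deriv (uIcc_of_le hL ▸ hs_mono))
      (Φ := fun y w => |h (y - w + s w) - h (y - w)| * |F (y - w)|)
      (by unfold Function.uncurry; fun_prop) 0 T
  have hK : Continuous fun y => ∫ w in (0 : ℝ)..L,
      |taylorRemainder P (y - w) (s w)| * |deriv F (y - w)| :=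
    continuous_integral_of_continuous
      (Ψ := fun y w => |taylorRemainder P (y - w) (s w)| * |deriv F (y - w)|)
      (hRP.abs.mul (hF'.comp continuous_sub).abs) 0 L
  have hB : ∀ w, Continuous fun y => |taylorRemainder P (y - w) (s w)| * |F (y - w)| := fun w =>
    (hRP.comp (Continuous.prodMk_left w)).abs.mul (hF₀.comp (continuous_sub_right w)).abs
  have hB₀ := hB 0
  simp only [sub_zero] at hB₀
  have hK' := hK.intervalIntegrable (μ := volume) 0 T
  have hBL := (hB L).intervalIntegrable (μ := volume) 0 T
  have hB₀' := hB₀.intervalIntegrable (μ := volume) 0 T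
  rw [← intervalIntegral.integral_add hJ hK', ← intervalIntegral.integral_add (hJ.add hK') hBL,
    ← intervalIntegral.integral_add ((hJ.add hK').add hBL) hB₀']
  exact intervalIntegral.integral_mono_on hT (hR.intervalIntegrable _ _)
    (((hJ.add hK').add hBL).add hB₀') fun y _ =>
      abs_integral_taylorRemainder_mul_le hP hh hF hL hs hs_diff hs_mono y

end JumpLength

section JumpAverage

variable {h φ k P s : ℝ → ℝ} {T L b M S : ℝ}

variable (hT : 0 ≤ T) (hh : ContDiff ℝ 1 h) (hhT : Function.Periodic h T)
  (hφ : Differentiable ℝ φ) (hφT : Function.Periodic φ T) (hb : ∀ x, |deriv φ x| ≤ b)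
  (hk_cont : Continuous k) (hkT : Function.Periodic k T) (hM : 0 ≤ M)
  (hk : ∀ x, k x ^ 2 ≤ M ^ 2 * (deriv h x ^ 2 + h x ^ 2))
  (hL : 0 ≤ L) (hs : Continuous s) (hsS : ∀ w ∈ Icc 0 L, s w ∈ Icc 0 S)
include hT hh hhT hφ hφT hb hk_cont hkT hM hk hL hs hsS

theorem integral_integral_abs_taylorRemainder_mul_le (hP : ∀ x, HasDerivAt P (h x) x) :
    ∫ y in (0 : ℝ)..T, ∫ w in (0 : ℝ)..L,
        |taylorRemainder P (y - w) (s w)| * (|k (y - w)| * exp (φ (y - w))) ≤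
      L * (S * (S * (M * exp (b * S) * ∫ x in (0 : ℝ)..T, sobolevDensity h φ x))) := by
  have hP₁ := contDiff_one_of_hasDerivAt hP hh.continuous
  have hbound := integral_kernel_mul_comp_sub_le (T := T) (L := L) (k := fun _ => 1)
    (Φ := fun x w => |taylorRemainder P x (s w)| * (|k x| * exp (φ x))) hL
    intervalIntegrable_const (fun _ _ => zero_le_one)
    ((continuous_taylorRemainder_comp hP₁ hs).abs.mul
      ((hk_cont.abs.mul hφ.continuous.rexp).comp continuous_fst))
    (fun w x => by simp only [taylorRemainder_periodic hP hh.continuous hhT _ x, hkT x, hφT x])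
    fun w hw => integral_abs_taylorRemainder_mul_le hT hh hhT hφ hφT hb hk_cont hM hk hP (hsS w hw)
  simpa only [one_mul, intervalIntegral.integral_const, sub_zero, smul_eq_mul, mul_one] using hbound

theorem integral_integral_deriv_mul_abs_increment_mul_le (hs_mono : MonotoneOn s (Icc 0 L)) :
    ∫ y in (0 : ℝ)..T, ∫ w in (0 : ℝ)..L,
        deriv s w * (|h (y - w + s w) - h (y - w)| * (|k (y - w)| * exp (φ (y - w)))) ≤
      S * (S * (M * exp (b * S) * ∫ x in (0 : ℝ)..T, sobolevDensity h φ x)) := by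
  have hs_mono' : MonotoneOn s (uIcc 0 L) := uIcc_of_le hL ▸ hs_mono
  have hS := hsS L (right_mem_Icc.2 hL)
  have hs₀ := hsS 0 (left_mem_Icc.2 hL)
  have hE := integral_sobolevDensity_nonneg hT h φ
  have htotal : ∫ w in (0 : ℝ)..L, deriv s w ≤ S := by
    have := hs_mono'.intervalIntegral_deriv_mem_uIcc
    rw [uIcc_of_le (sub_nonneg.2 (hs_mono (left_mem_Icc.2 hL) (right_mem_Icc.2 hL) hL))] at this
    linarith [this.2, hS.2, hs₀.1]
  refine (integral_kernel_mul_comp_sub_le (T := T)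
    (Φ := fun x w => |h (x + s w) - h x| * (|k x| * exp (φ x))) hL
    hs_mono'.intervalIntegrable_deriv (fun w => deriv_nonneg_of_monotoneOn_Icc hs_mono) ?_
    (fun w x => by simp only [add_right_comm x T, hhT _, hkT x, hφT x])
    fun w hw => integral_abs_increment_mul_le hT hh hhT hφ hφT hb hk_cont hM hk
      (hsS w hw)).trans (mul_le_mul_of_nonneg_right htotal ?_)
  · have hh₀ := hh.continuous
    have hφ₀ := hφ.continuous
    unfold Function.uncurry
    fun_prop
  · have := hS.1.trans hS.2
    positivity

end JumpAverage

section JumpRemainder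

variable {h φ γ s : ℝ → ℝ} {T L b G S : ℝ}

theorem deriv_mul_exp (hh : Differentiable ℝ h) (hφ : Differentiable ℝ φ) (x : ℝ) :
    deriv (fun x => h x * exp (φ x)) x = (deriv h x + deriv φ x * h x) * exp (φ x) := by
  refine ((hh x).hasDerivAt.mul (hφ x).hasDerivAt.exp).deriv.trans ?_
  ring

theorem sq_deriv_add_mul_le (hb : ∀ x, |deriv φ x| ≤ b) (x : ℝ) :
    (deriv h x + deriv φ x * h x) ^ 2 ≤ (1 + b) ^ 2 * (deriv h x ^ 2 + h x ^ 2) := by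
  have hb₀ : 0 ≤ b := (abs_nonneg _).trans (hb 0)
  have hsq : deriv φ x ^ 2 ≤ b ^ 2 := sq_le_sq.2 ((hb x).trans (le_abs_self b))
  nlinarith [sq_nonneg (deriv h x * deriv φ x - h x),
    mul_nonneg hb₀ (add_nonneg (sq_nonneg (deriv h x)) (sq_nonneg (h x))),
    mul_le_mul_of_nonneg_right hsq (add_nonneg (sq_nonneg (deriv h x)) (sq_nonneg (h x)))]

theorem continuous_taylorRemainder_mul_comp_add (hh : ContDiff ℝ 1 h)
    (hs : Continuous s) (hγ : Continuous γ) :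
    Continuous (Function.uncurry fun x w => taylorRemainder h x (s w) * γ (x + w)) :=
  (continuous_taylorRemainder_comp hh hs).mul (hγ.comp continuous_add)

theorem continuous_taylorRemainder_mul_comp_sub (hh : ContDiff ℝ 1 h)
    (hs : Continuous s) (hγ : Continuous γ) :
    Continuous (Function.uncurry fun x w => taylorRemainder h x (s w) * γ (x - w)) :=
  (continuous_taylorRemainder_comp hh hs).mul (hγ.comp continuous_sub)

/-- What is left of the jumps of size `±s w` towards the mass of density `γ` at signed distance
`±w ∈ [-L, L]`, acting on `h`, once their first-order part is removed. -/
def jumpRemainder (s γ : ℝ → ℝ) (L : ℝ) (h : ℝ → ℝ) (x : ℝ) : ℝ :=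
  (∫ w in (0 : ℝ)..L, taylorRemainder h x (s w) * γ (x + w)) +
    ∫ w in (0 : ℝ)..L, taylorRemainder h x (-s w) * γ (x - w)

theorem continuous_integral_forward_taylorRemainder (hh : ContDiff ℝ 1 h) (hs : Continuous s)
    (hγ : Continuous γ) (L : ℝ) :
    Continuous fun x => ∫ w in (0 : ℝ)..L, taylorRemainder h x (s w) * γ (x + w) :=
  continuous_integral_of_continuous (continuous_taylorRemainder_mul_comp_add hh hs hγ) 0 L

theorem continuous_integral_backward_taylorRemainder (hh : ContDiff ℝ 1 h) (hs : Continuous s)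
    (hγ : Continuous γ) (L : ℝ) :
    Continuous fun x => ∫ w in (0 : ℝ)..L, taylorRemainder h x (-s w) * γ (x - w) :=
  continuous_integral_of_continuous
    (continuous_taylorRemainder_mul_comp_sub hh hs.fun_neg hγ) 0 L

theorem continuous_jumpRemainder (hh : ContDiff ℝ 1 h) (hs : Continuous s) (hγ : Continuous γ)
    (L : ℝ) : Continuous (jumpRemainder s γ L h) :=
  (continuous_integral_forward_taylorRemainder hh hs hγ L).add
    (continuous_integral_backward_taylorRemainder hh hs hγ L)

variable (hT : 0 ≤ T) (hh : ContDiff ℝ 1 h) (hhT : Function.Periodic h T)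
  (hφ : ContDiff ℝ 1 φ) (hφT : Function.Periodic φ T) (hb : ∀ x, |deriv φ x| ≤ b)
  (hL : 0 ≤ L) (hs : Continuous s) (hs_diff : DifferentiableOn ℝ s (Ioo 0 L))
  (hs_mono : MonotoneOn s (Icc 0 L)) (hsS : ∀ w ∈ Icc 0 L, s w ∈ Icc 0 S)
include hT hh hhT hφ hφT hb hL hs hs_diff hs_mono hsS

theorem integral_abs_integral_taylorRemainder_mul_exp_le :
    ∫ y in (0 : ℝ)..T, |∫ w in (0 : ℝ)..L,
        taylorRemainder h (y - w) (s w) * (h (y - w) * exp (φ (y - w)))| ≤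
      (L + 3) * (S * (S * ((1 + b) * exp (b * S) *
        ∫ x in (0 : ℝ)..T, sobolevDensity h φ x))) := by
  have hb₀ : 0 ≤ b := (abs_nonneg _).trans (hb 0)
  have hφ_diff := hφ.differentiable one_ne_zero
  have hh_diff := hh.differentiable one_ne_zero
  set P : ℝ → ℝ := fun x => ∫ t in (0 : ℝ)..x, h t
  have hP : ∀ x, HasDerivAt P (h x) x := fun x =>
    (hh.continuous.integral_hasStrictDerivAt 0 x).hasDerivAt
  have hF : ContDiff ℝ 1 fun x => h x * exp (φ x) := hh.mul hφ.exp
  have hM : 0 ≤ 1 + b := by positivity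
  have hk : ∀ x, h x ^ 2 ≤ (1 + b) ^ 2 * (deriv h x ^ 2 + h x ^ 2) := fun x => by
    nlinarith [sq_nonneg (deriv h x), mul_nonneg (mul_nonneg hb₀ (by linarith : 0 ≤ 2 + b))
      (add_nonneg (sq_nonneg (deriv h x)) (sq_nonneg (h x)))]
  have hk' := sq_deriv_add_mul_le (h := h) hb
  have hk'_cont : Continuous fun x => deriv h x + deriv φ x * h x :=
    hh.continuous_deriv_one.add (hφ.continuous_deriv_one.mul hh.continuous)
  have hk'T : Function.Periodic (fun x => deriv h x + deriv φ x * h x) T := fun x => by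
    simp only [periodic_deriv hhT x, periodic_deriv hφT x, hhT x]
  have hJ := integral_integral_deriv_mul_abs_increment_mul_le hT hh hhT hφ_diff hφT hb hh.continuous
    hhT hM hk hL hs hsS hs_mono
  have hK := integral_integral_abs_taylorRemainder_mul_le hT hh hhT hφ_diff hφT hb hk'_cont hk'T hM
    hk' hL hs hsS hP
  have hB := fun w hw => integral_abs_taylorRemainder_mul_comp_sub_le hT hh hhT hφ_diff hφT hb
    hh.continuous hM hk hP hhT (hsS w hw)
  have hsplit := integral_abs_integral_taylorRemainder_mul_le hP hh hF hL hs hs_diff hs_mono hT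
  simp only [deriv_mul_exp hh_diff hφ_diff, abs_mul, abs_exp] at hsplit
  have hB₀ := hB 0 (left_mem_Icc.2 hL) 0
  have hBL := hB L (right_mem_Icc.2 hL) L
  simp only [sub_zero] at hB₀
  linarith

theorem abs_integral_forward_taylorRemainder_le (hγ : Continuous γ)
    (hγT : Function.Periodic γ T) (hG : ∀ x, |γ x| ≤ G) :
    |∫ x in (0 : ℝ)..T, (∫ w in (0 : ℝ)..L, taylorRemainder h x (s w) * γ (x + w)) *
        (h x * exp (φ x))| ≤
      G * ((L + 3) * (S * (S * ((1 + b) * exp (b * S) *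
        ∫ x in (0 : ℝ)..T, sobolevDensity h φ x)))) := by
  have hF : Continuous fun x => h x * exp (φ x) := hh.continuous.mul hφ.continuous.rexp
  have hR := continuous_taylorRemainder_comp hh hs
  have hG₀ : 0 ≤ G := (abs_nonneg _).trans (hG 0)
  have hRF : Continuous fun y =>
      ∫ w in (0 : ℝ)..L, taylorRemainder h (y - w) (s w) * (h (y - w) * exp (φ (y - w))) :=
    continuous_integral_of_continuous
      (Ψ := fun y w => taylorRemainder h (y - w) (s w) * (h (y - w) * exp (φ (y - w))))
      ((hR.comp (continuous_sub.prodMk continuous_snd)).mul (hF.comp continuous_sub)) 0 L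
  rw [integral_integral_mul_comp_add_mul L hR
    (fun w => taylorRemainder_periodic (fun x => (hh.differentiable one_ne_zero x).hasDerivAt)
      hh.continuous_deriv_one (periodic_deriv hhT) (s w)) hF
    (fun x => by simp only [hhT x, hφT x]) hγ hγT]
  calc _ ≤ ∫ y in (0 : ℝ)..T, |(∫ w in (0 : ℝ)..L,
        taylorRemainder h (y - w) (s w) * (h (y - w) * exp (φ (y - w)))) * γ y| :=
        intervalIntegral.abs_integral_le_integral_abs hT
    _ ≤ ∫ y in (0 : ℝ)..T, G * |∫ w in (0 : ℝ)..L,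
        taylorRemainder h (y - w) (s w) * (h (y - w) * exp (φ (y - w)))| := by
        refine intervalIntegral.integral_mono_on hT ((hRF.mul hγ).abs.intervalIntegrable _ _)
          ((continuous_const.mul hRF.abs).intervalIntegrable _ _) fun y _ => ?_
        rw [abs_mul, mul_comm]
        exact mul_le_mul_of_nonneg_right (hG y) (abs_nonneg _)
    _ ≤ _ := by
        rw [intervalIntegral.integral_const_mul]
        exact mul_le_mul_of_nonneg_left (integral_abs_integral_taylorRemainder_mul_exp_le hT hh
          hhT hφ hφT hb hL hs hs_diff hs_mono hsS) hG₀

theorem abs_integral_backward_taylorRemainder_le (hγ : Continuous γ)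
    (hγT : Function.Periodic γ T) (hG : ∀ x, |γ x| ≤ G) :
    |∫ x in (0 : ℝ)..T, (∫ w in (0 : ℝ)..L, taylorRemainder h x (-s w) * γ (x - w)) *
        (h x * exp (φ x))| ≤
      G * ((L + 3) * (S * (S * ((1 + b) * exp (b * S) *
        ∫ x in (0 : ℝ)..T, sobolevDensity h φ x)))) := by
  -- The reflection `x ↦ -x` exchanges forward and backward jumps.
  have hneg : ∀ {f : ℝ → ℝ}, Function.Periodic f T → Function.Periodic (fun x => f (-x)) T :=
    fun hf x => by simpa only [neg_add, sub_eq_add_neg] using hf.sub_eq (-x)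
  have hforward := abs_integral_forward_taylorRemainder_le (h := fun x => h (-x))
    (φ := fun x => φ (-x)) (γ := fun x => γ (-x)) hT (hh.comp contDiff_neg) (hneg hhT)
    (hφ.comp contDiff_neg) (hneg hφT) (fun x => by rw [deriv_comp_neg, abs_neg]; exact hb (-x))
    hL hs hs_diff hs_mono hsS (hγ.comp continuous_neg) (hneg hγT) fun x => hG (-x)
  have hE : ∀ x, sobolevDensity (fun x => h (-x)) (fun x => φ (-x)) x = sobolevDensity h φ (-x) :=
    fun x => by simp only [sobolevDensity, deriv_comp_neg, neg_sq]
  have hR : ∀ x v, taylorRemainder (fun x => h (-x)) x v = taylorRemainder h (-x) (-v) :=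
    fun x v => by simp only [taylorRemainder, deriv_comp_neg, neg_add]; ring
  have hγ_neg : ∀ x w, γ (-(x + w)) = γ (-x - w) := fun x w => by rw [neg_add, sub_eq_add_neg]
  simp only [hE, hR, hγ_neg] at hforward
  rw [integral_comp_neg_of_periodic (sobolevDensity_periodic hhT hφT)] at hforward
  rwa [integral_comp_neg_of_periodic (f := fun x =>
    (∫ w in (0 : ℝ)..L, taylorRemainder h x (-s w) * γ (x - w)) * (h x * exp (φ x)))] at hforward
  intro x
  simp only [taylorRemainder, add_right_comm x T, add_sub_right_comm x T, periodic_deriv hhT x,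
    hhT _, hγT _, hφT x]

theorem integral_jumpRemainder_mul_exp_le (hγ : Continuous γ)
    (hγT : Function.Periodic γ T) (hG : ∀ x, |γ x| ≤ G) :
    ∫ x in (0 : ℝ)..T, jumpRemainder s γ L h x * (h x * exp (φ x)) ≤
      2 * (G * ((L + 3) * (S * (S * ((1 + b) * exp (b * S) *
        ∫ x in (0 : ℝ)..T, sobolevDensity h φ x))))) := by
  have hF : Continuous fun x => h x * exp (φ x) := hh.continuous.mul hφ.continuous.rexp
  have hforward := abs_integral_forward_taylorRemainder_le hT hh hhT hφ hφT hb hL hs hs_diff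
    hs_mono hsS hγ hγT hG
  have hbackward := abs_integral_backward_taylorRemainder_le hT hh hhT hφ hφT hb hL hs hs_diff
    hs_mono hsS hγ hγT hG
  simp only [jumpRemainder, add_mul]
  rw [intervalIntegral.integral_add]
  · linarith [le_of_abs_le hforward, le_of_abs_le hbackward]
  · exact ((continuous_integral_forward_taylorRemainder hh hs hγ L).mul hF).intervalIntegrable _ _
  · exact ((continuous_integral_backward_taylorRemainder hh hs hγ L).mul hF).intervalIntegrable _ _

end JumpRemainder

/-! ### The potential and the jump generator on the line -/

section RadialPotential

/-- The potential `∫ ρ(|w|) γ(x + w) dw` over `[-L, L]`, folded onto `[0, L]`: it is the mean cost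
`ρ(d(x, ·))` on a circle of length `2L` when `γ` is the periodic lift of a density. -/
def radialPotential (ρ γ : ℝ → ℝ) (L x : ℝ) : ℝ :=
  ∫ w in (0 : ℝ)..L, ρ w * (γ (x + w) + γ (x - w))

/-- The force deriving from the potential `radialPotential ρ γ L`, where `ρ' = deriv ρ`: each unit
of mass at distance `w` attracts with strength `ρ' w`. -/
def radialForce (ρ' γ : ℝ → ℝ) (L x : ℝ) : ℝ :=
  ∫ w in (0 : ℝ)..L, ρ' w * (γ (x + w) - γ (x - w))

variable {ρ ρ' γ Γ : ℝ → ℝ} {L G : ℝ}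

theorem radialPotential_periodic {T : ℝ} (ρ : ℝ → ℝ) (hγT : Function.Periodic γ T) (L : ℝ) :
    Function.Periodic (radialPotential ρ γ L) T := fun x => by
  simp only [radialPotential, add_right_comm x T, add_sub_right_comm x T, hγT _]

theorem continuous_radialPotential (hρ : Continuous ρ) (hγ : Continuous γ) (L : ℝ) :
    Continuous (radialPotential ρ γ L) :=
  continuous_integral_of_continuous
    (Ψ := fun x w => ρ w * (γ (x + w) + γ (x - w)))
    ((hρ.comp continuous_snd).mul ((hγ.comp continuous_add).add (hγ.comp continuous_sub))) 0 L

theorem continuous_kernel_comp_add_sub (hρ' : Continuous ρ') (hγ : Continuous γ) :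
    Continuous (Function.uncurry fun x w => ρ' w * (γ (x + w) - γ (x - w))) :=
  (hρ'.comp continuous_snd).mul ((hγ.comp continuous_add).sub (hγ.comp continuous_sub))

theorem continuous_radialForce (hρ' : Continuous ρ') (hγ : Continuous γ) (L : ℝ) :
    Continuous (radialForce ρ' γ L) :=
  continuous_integral_of_continuous (continuous_kernel_comp_add_sub hρ' hγ) 0 L

theorem abs_radialForce_le {R : ℝ} (hL : 0 ≤ L) (hR : ∀ w ∈ Icc 0 L, |ρ' w| ≤ R)
    (hG : ∀ x, |γ x| ≤ G) (x : ℝ) : |radialForce ρ' γ L x| ≤ R * (2 * G) * L := by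
  have hR₀ : 0 ≤ R := (abs_nonneg _).trans (hR 0 (left_mem_Icc.2 hL))
  have hbound := intervalIntegral.norm_integral_le_of_norm_le_const (a := 0) (b := L)
    (f := fun w => ρ' w * (γ (x + w) - γ (x - w))) (C := R * (2 * G)) fun w hw => by
      rw [norm_mul, Real.norm_eq_abs, Real.norm_eq_abs]
      rw [uIoc_of_le hL] at hw
      refine mul_le_mul (hR w (Ioc_subset_Icc_self hw)) ?_ (abs_nonneg _) hR₀
      exact (abs_sub _ _).trans (by linarith [hG (x + w), hG (x - w)])
  rwa [sub_zero, abs_of_nonneg hL] at hbound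

theorem hasDerivAt_radialForce (hρ' : Continuous ρ') (hΓ : ∀ x, HasDerivAt Γ (γ x) x)
    (hγ : Continuous γ) (hG : ∀ x, |γ x| ≤ G) (L x : ℝ) :
    HasDerivAt (radialForce ρ' Γ L) (radialForce ρ' γ L x) x := by
  have hΓ_cont : Continuous Γ := continuous_iff_continuousAt.2 fun x => (hΓ x).continuousAt
  have hF := continuous_kernel_comp_add_sub hρ' hΓ_cont
  have hF' := continuous_kernel_comp_add_sub hρ' hγ
  refine (intervalIntegral.hasDerivAt_integral_of_dominated_loc_of_deriv_le
    (F := fun x w => ρ' w * (Γ (x + w) - Γ (x - w)))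
    (F' := fun x w => ρ' w * (γ (x + w) - γ (x - w)))
    (bound := fun w => |ρ' w| * (2 * G)) univ_mem
    (Eventually.of_forall fun x => (hF.uncurry_left x).aestronglyMeasurable)
    ((hF.uncurry_left x).intervalIntegrable _ _) (hF'.uncurry_left x).aestronglyMeasurable
    (ae_of_all _ fun w _ x _ => ?_)
    ((hρ'.abs.mul continuous_const).intervalIntegrable _ _)
    (ae_of_all _ fun w _ x _ => ?_)).2
  · rw [norm_mul, Real.norm_eq_abs, Real.norm_eq_abs]
    refine mul_le_mul_of_nonneg_left ?_ (abs_nonneg _)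
    exact (abs_sub _ _).trans (by linarith [hG (x + w), hG (x - w)])
  · exact (((hΓ (x + w)).comp_add_const x w).sub ((hΓ (x - w)).comp_sub_const x w)).const_mul _

-- Integrating by parts in `w` leaves only the primitive of `γ`, so that the potential can be
-- differentiated in `x` without differentiating `γ`.
theorem radialPotential_eq_sub_radialForce (hρ : ∀ w, HasDerivAt ρ (ρ' w) w)
    (hρ' : Continuous ρ') (hΓ : ∀ x, HasDerivAt Γ (γ x) x) (hγ : Continuous γ) (L x : ℝ) :
    radialPotential ρ γ L x = ρ L * (Γ (x + L) - Γ (x - L)) - radialForce ρ' Γ L x := by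
  have hderiv : ∀ w, HasDerivAt (fun w => Γ (x + w) - Γ (x - w)) (γ (x + w) + γ (x - w)) w :=
    fun w => by
      simpa only [sub_neg_eq_add] using
        ((hΓ (x + w)).comp_const_add x w).fun_sub ((hΓ (x - w)).comp_const_sub x w)
  have hparts := intervalIntegral.integral_mul_deriv_eq_deriv_mul (a := 0) (b := L)
    (fun w _ => hρ w) (fun w _ => hderiv w) (hρ'.intervalIntegrable _ _)
    (((hγ.comp (continuous_const_add x)).add
      (hγ.comp (continuous_sub_left x))).intervalIntegrable _ _)
  rw [radialPotential, hparts, radialForce, add_zero, sub_zero, sub_self, mul_zero, sub_zero]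

theorem hasDerivAt_radialPotential (hρ : ∀ w, HasDerivAt ρ (ρ' w) w) (hρ' : Continuous ρ')
    (hγ : Continuous γ) (hγT : Function.Periodic γ (2 * L)) (hG : ∀ x, |γ x| ≤ G) (x : ℝ) :
    HasDerivAt (radialPotential ρ γ L) (-radialForce ρ' γ L x) x := by
  have hΓ : ∀ x, HasDerivAt (fun x => ∫ t in (0 : ℝ)..x, γ t) (γ x) x := fun x =>
    (hγ.integral_hasStrictDerivAt 0 x).hasDerivAt
  have hboundary : γ (x + L) = γ (x - L) := by
    rw [← hγT (x - L)]
    ring_nf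
  rw [funext (radialPotential_eq_sub_radialForce hρ hρ' hΓ hγ L)]
  convert! ((((hΓ (x + L)).comp_add_const x L).sub ((hΓ (x - L)).comp_sub_const x L)).const_mul
    (ρ L)).sub (hasDerivAt_radialForce hρ' hΓ hγ hG L x) using 1
  rw [hboundary, sub_self, mul_zero, zero_sub]

end RadialPotential

section JumpGenerator

/-- The generator `½ h'' + α⁻¹ ∫ (jump increments of h)` in the lifted coordinate: mass of density
`γ` at signed distance `±w`, `w ∈ [0, L]`, makes the process jump by `±s w` towards it. -/
def jumpGenerator (s γ : ℝ → ℝ) (L α : ℝ) (h : ℝ → ℝ) (x : ℝ) : ℝ :=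
  1 / 2 * deriv (deriv h) x + α⁻¹ * ∫ w in (0 : ℝ)..L,
    ((h (x + s w) - h x) * γ (x + w) + (h (x - s w) - h x) * γ (x - w))

variable {h φ γ ρ ρ' : ℝ → ℝ} {T L G R V α β σ : ℝ}

theorem integral_generator_mul_exp_eq_neg (hh : ContDiff ℝ 2 h) (hhT : Function.Periodic h T)
    (hφ : ContDiff ℝ 1 φ) (hφT : Function.Periodic φ T) :
    ∫ x in (0 : ℝ)..T, (deriv (deriv h) x + deriv φ x * deriv h x) * (h x * exp (φ x)) =
      -∫ x in (0 : ℝ)..T, deriv h x ^ 2 * exp (φ x) := by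
  have hh₁ : ContDiff ℝ 1 h := hh.of_le one_le_two
  have hh' : ContDiff ℝ 1 (deriv h) := hh.deriv' (n := 1)
  have hhφ : ContDiff ℝ 1 fun x => h x * exp (φ x) := hh₁.mul hφ.exp
  have hparts := intervalIntegral.integral_deriv_mul_eq_sub (a := 0) (b := T)
    (fun x _ => (hh'.differentiable one_ne_zero x).hasDerivAt)
    (fun x _ => (hhφ.differentiable one_ne_zero x).hasDerivAt)
    (hh'.continuous_deriv_one.intervalIntegrable _ _)
    (hhφ.continuous_deriv_one.intervalIntegrable _ _)
  have hboundary : deriv h T * (h T * exp (φ T)) - deriv h 0 * (h 0 * exp (φ 0)) = 0 := by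
    rw [(periodic_deriv hhT).eq, hhT.eq, hφT.eq, sub_self]
  rw [hboundary] at hparts
  rw [eq_neg_iff_add_eq_zero, ← hparts, ← intervalIntegral.integral_add]
  · congr with x
    rw [deriv_mul_exp (hh₁.differentiable one_ne_zero) (hφ.differentiable one_ne_zero)]
    ring
  · exact (((hh'.continuous_deriv_one.add
      (hφ.continuous_deriv_one.mul hh₁.continuous_deriv_one)).mul
        hhφ.continuous).intervalIntegrable _ _)
  · exact ((hh₁.continuous_deriv_one.pow 2).mul hφ.continuous.rexp).intervalIntegrable _ _

theorem integral_generator_add_mul_exp_eq {I : ℝ → ℝ} (hh : ContDiff ℝ 2 h)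
    (hhT : Function.Periodic h T) (hφ : ContDiff ℝ 1 φ) (hφT : Function.Periodic φ T)
    (hI : Continuous I) (c : ℝ) :
    ∫ x in (0 : ℝ)..T, (1 / 2 * (deriv (deriv h) x + deriv φ x * deriv h x) + c * I x) *
        (h x * exp (φ x)) =
      -(1 / 2) * (∫ x in (0 : ℝ)..T, deriv h x ^ 2 * exp (φ x)) +
        c * ∫ x in (0 : ℝ)..T, I x * (h x * exp (φ x)) := by
  have hh₁ : ContDiff ℝ 1 h := hh.of_le one_le_two
  have hh' : ContDiff ℝ 1 (deriv h) := hh.deriv' (n := 1)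
  have hhφ : Continuous fun x => h x * exp (φ x) := hh.continuous.mul hφ.continuous.rexp
  have hdiffusion : Continuous fun x => deriv (deriv h) x + deriv φ x * deriv h x :=
    hh'.continuous_deriv_one.add (hφ.continuous_deriv_one.mul hh₁.continuous_deriv_one)
  simp only [add_mul _ (c * _), mul_assoc (1 / 2 : ℝ), mul_assoc c]
  rw [intervalIntegral.integral_add (((hdiffusion.fun_mul hhφ).intervalIntegrable _ _).const_mul _)
      (((hI.fun_mul hhφ).intervalIntegrable _ _).const_mul _),
    intervalIntegral.integral_const_mul, intervalIntegral.integral_const_mul,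
    integral_generator_mul_exp_eq_neg hh hhT hφ hφT, mul_neg, neg_mul]

-- The first-order part of the jumps is exactly the drift `-β U' / 2` of the Gibbs measure.
theorem jumpGenerator_eq_add_jumpRemainder (hα : α ≠ 0) (hh : ContDiff ℝ 1 h) (hρ' : Continuous ρ')
    (hγ : Continuous γ) (x : ℝ) :
    jumpGenerator (fun w => α * β / 2 * ρ' w) γ L α h x =
      1 / 2 * (deriv (deriv h) x + β * radialForce ρ' γ L x * deriv h x) +
        α⁻¹ * jumpRemainder (fun w => α * β / 2 * ρ' w) γ L h x := by
  have hs : Continuous fun w => α * β / 2 * ρ' w := continuous_const.mul hρ'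
  have hplus := ((continuous_taylorRemainder_mul_comp_add hh hs hγ).uncurry_left
    x).intervalIntegrable (μ := volume) 0 L
  have hminus := ((continuous_taylorRemainder_mul_comp_sub hh hs.fun_neg hγ).uncurry_left
    x).intervalIntegrable (μ := volume) 0 L
  have hforce := ((continuous_kernel_comp_add_sub hρ' hγ).uncurry_left x).intervalIntegrable
    (μ := volume) 0 L
  have hsplit : ∫ w in (0 : ℝ)..L, ((h (x + α * β / 2 * ρ' w) - h x) * γ (x + w) +
        (h (x - α * β / 2 * ρ' w) - h x) * γ (x - w)) =
      jumpRemainder (fun w => α * β / 2 * ρ' w) γ L h x +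
        α * β / 2 * deriv h x * radialForce ρ' γ L x := by
    rw [radialForce, jumpRemainder, ← intervalIntegral.integral_const_mul,
      ← intervalIntegral.integral_add hplus hminus,
      ← intervalIntegral.integral_add (hplus.add hminus) (hforce.const_mul _)]
    congr with w
    simp only [taylorRemainder, sub_eq_add_neg x]
    ring
  rw [jumpGenerator, hsplit]
  field_simp
  ring

theorem jumpError_le (hα : 0 < α) (hβ : 0 ≤ β) (hσ : α * β ^ 2 ≤ σ) (hR : 0 ≤ R) (hV : 0 ≤ V)
    {Q E : ℝ} (hQ : 0 ≤ Q) (hE : 0 ≤ E) :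
    α⁻¹ * (2 * (Q * (α * β / 2 * R * (α * β / 2 * R *
        ((1 + β * V) * exp (β * V * (α * β / 2 * R)) * E))))) ≤
      Q / 2 * R ^ 2 * (1 + V) * exp (V * R / 2 * σ) * (α * β ^ 2 * (1 + β)) * E := by
  have hV' : 1 + β * V ≤ (1 + V) * (1 + β) := by nlinarith
  have hexp : exp (β * V * (α * β / 2 * R)) ≤ exp (V * R / 2 * σ) := exp_le_exp.2 <| by
    calc β * V * (α * β / 2 * R) = V * R / 2 * (α * β ^ 2) := by ring
      _ ≤ V * R / 2 * σ := mul_le_mul_of_nonneg_left hσ (by positivity)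
  calc _ = Q / 2 * R ^ 2 * (α * β ^ 2) * E * ((1 + β * V) * exp (β * V * (α * β / 2 * R))) := by
        field_simp
    _ ≤ Q / 2 * R ^ 2 * (α * β ^ 2) * E * ((1 + V) * (1 + β) * exp (V * R / 2 * σ)) := by
        gcongr
    _ = _ := by ring

theorem integral_jumpGenerator_mul_le (hL : 0 ≤ L) (hρ : ∀ w, HasDerivAt ρ (ρ' w) w)
    (hρ' : Continuous ρ') (hρ'_diff : DifferentiableOn ℝ ρ' (Ioo 0 L))
    (hρ'_mono : MonotoneOn ρ' (Icc 0 L)) (hR : ∀ w ∈ Icc 0 L, ρ' w ∈ Icc 0 R)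
    (hγ : Continuous γ) (hγT : Function.Periodic γ (2 * L)) (hG : ∀ x, |γ x| ≤ G)
    (hV : ∀ x, |radialForce ρ' γ L x| ≤ V) (hα : 0 < α) (hβ : 0 ≤ β) (hσ : α * β ^ 2 ≤ σ)
    (hh : ContDiff ℝ 2 h) (hhT : Function.Periodic h (2 * L)) :
    ∫ x in (0 : ℝ)..2 * L, jumpGenerator (fun w => α * β / 2 * ρ' w) γ L α h x *
        (h x * exp (-β * radialPotential ρ γ L x)) ≤
      -(1 / 2) * (∫ x in (0 : ℝ)..2 * L, deriv h x ^ 2 * exp (-β * radialPotential ρ γ L x)) +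
        G * (L + 3) / 2 * R ^ 2 * (1 + V) * exp (V * R / 2 * σ) * (α * β ^ 2 * (1 + β)) *
          ∫ x in (0 : ℝ)..2 * L, sobolevDensity h (fun x => -β * radialPotential ρ γ L x) x := by
  have hT : 0 ≤ 2 * L := by positivity
  have hG₀ : 0 ≤ G := (abs_nonneg _).trans (hG 0)
  have hV₀ : 0 ≤ V := (abs_nonneg _).trans (hV 0)
  obtain ⟨hR₀, hR₀'⟩ := hR 0 (left_mem_Icc.2 hL)
  have hh₁ : ContDiff ℝ 1 h := hh.of_le one_le_two
  set φ : ℝ → ℝ := fun x => -β * radialPotential ρ γ L x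
  set s : ℝ → ℝ := fun w => α * β / 2 * ρ' w
  have hφ_deriv : ∀ x, HasDerivAt φ (β * radialForce ρ' γ L x) x := fun x => by
    simpa only [neg_mul_neg] using
      (hasDerivAt_radialPotential hρ hρ' hγ hγT hG x).const_mul (-β)
  have hφ : ContDiff ℝ 1 φ := contDiff_one_of_hasDerivAt hφ_deriv
    (continuous_const.mul (continuous_radialForce hρ' hγ L))
  have hφT : Function.Periodic φ (2 * L) := (radialPotential_periodic ρ hγT L).comp (-β * ·)
  have hs : Continuous s := continuous_const.mul hρ'
  have hb : ∀ x, |deriv φ x| ≤ β * V := fun x => by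
    rw [(hφ_deriv x).deriv, abs_mul, abs_of_nonneg hβ]
    exact mul_le_mul_of_nonneg_left (hV x) hβ
  have hs_diff : DifferentiableOn ℝ s (Ioo 0 L) := hρ'_diff.const_mul _
  have hs_mono : MonotoneOn s (Icc 0 L) := fun v hv w hw hvw =>
    mul_le_mul_of_nonneg_left (hρ'_mono hv hw hvw) (by positivity)
  have hsS : ∀ w ∈ Icc 0 L, s w ∈ Icc 0 (α * β / 2 * R) := fun w hw =>
    ⟨mul_nonneg (by positivity) (hR w hw).1,
      mul_le_mul_of_nonneg_left (hR w hw).2 (by positivity)⟩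
  have hjumps := integral_jumpRemainder_mul_exp_le hT hh₁ hhT hφ hφT hb hL hs hs_diff
    hs_mono hsS hγ hγT hG
  have hE := integral_sobolevDensity_nonneg hT h φ
  simp only [s, jumpGenerator_eq_add_jumpRemainder hα.ne' hh₁ hρ' hγ, ← (hφ_deriv _).deriv]
  rw [integral_generator_add_mul_exp_eq hh hhT hφ hφT
    (continuous_jumpRemainder hh₁ hs hγ L)]
  have hscale := jumpError_le hα hβ hσ (hR₀.trans hR₀') hV₀ (Q := G * (L + 3)) (by positivity) hE
  refine add_le_add le_rfl (le_trans ?_ hscale)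
  refine mul_le_mul_of_nonneg_left (hjumps.trans_eq ?_) (by positivity)
  ring

theorem exists_integral_jumpGenerator_rpow_mul_le {p : ℝ} (hp : 1 ≤ p) (hL : 0 < L) (hG : 0 < G)
    (σ : ℝ) : ∃ C : ℝ, 0 < C ∧ ∀ γ : ℝ → ℝ, Continuous γ → Function.Periodic γ (2 * L) →
      (∀ x, |γ x| ≤ G) → ∀ α β : ℝ, 0 < α → 0 ≤ β → α * β ^ 2 ≤ σ →
      ∀ h : ℝ → ℝ, ContDiff ℝ 2 h → Function.Periodic h (2 * L) →
        ∫ x in (0 : ℝ)..2 * L, jumpGenerator (fun w => α * β / 2 * (p * w ^ (p - 1))) γ L α h x *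
            (h x * exp (-β * radialPotential (· ^ p) γ L x)) ≤
          -(1 / 2) *
              (∫ x in (0 : ℝ)..2 * L, deriv h x ^ 2 * exp (-β * radialPotential (· ^ p) γ L x)) +
            C * (α * β ^ 2 * (1 + β)) * ∫ x in (0 : ℝ)..2 * L,
              sobolevDensity h (fun x => -β * radialPotential (· ^ p) γ L x) x := by
  have hp₁ : 0 ≤ p - 1 := sub_nonneg.2 hp
  set ρ' : ℝ → ℝ := fun w => p * w ^ (p - 1)
  set R : ℝ := p * L ^ (p - 1)
  have hR₀ : 0 < R := by positivity
  have hρ' : Continuous ρ' := continuous_const.mul (Real.continuous_rpow_const hp₁)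
  have hρ'_diff : DifferentiableOn ℝ ρ' (Ioo 0 L) := fun w hw =>
    (((Real.hasDerivAt_rpow_const (Or.inl hw.1.ne')).const_mul
      p).differentiableAt).differentiableWithinAt
  have hρ'_mono : MonotoneOn ρ' (Icc 0 L) := fun v hv w _ hvw =>
    mul_le_mul_of_nonneg_left (Real.rpow_le_rpow hv.1 hvw hp₁) (by positivity)
  have hR : ∀ w ∈ Icc 0 L, ρ' w ∈ Icc 0 R := fun w hw =>
    ⟨mul_nonneg (by positivity) (Real.rpow_nonneg hw.1 _),
      hρ'_mono hw (right_mem_Icc.2 hL.le) hw.2⟩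
  refine ⟨_, ?_, fun γ hγ hγT hγG α β hα hβ hσ h hh hhT => integral_jumpGenerator_mul_le hL.le
    (fun w => Real.hasDerivAt_rpow_const (Or.inr hp)) hρ' hρ'_diff hρ'_mono hR hγ hγT hγG
    (abs_radialForce_le hL.le (fun w hw => (abs_of_nonneg (hR w hw).1).trans_le (hR w hw).2) hγG)
    hα hβ hσ hh hhT⟩
  positivity

end JumpGenerator

/-! ### Lifting from the circle -/

section Circle

theorem coe_rep (z : 𝕋) : (rep z : 𝕋) = z := AddCircle.coe_equivIoc

theorem rep_coe {x : ℝ} (hx : x ∈ Ioc (-π) π) : rep (x : 𝕋) = x :=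
  AddCircle.equivIoc_coe_of_mem ⟨hx.1, by linarith [hx.2]⟩

theorem apply_rep_coe {F : ℝ → ℝ} (hF : Function.Periodic F (2 * π)) (x : ℝ) :
    F (rep (x : 𝕋)) = F x := by
  rw [← hF.lift_coe, coe_rep, hF.lift_coe]

theorem integral_lam (F : 𝕋 → ℝ) (t : ℝ) :
    ∫ z, F z ∂lam = (2 * π)⁻¹ * ∫ x in t..t + 2 * π, F (x : 𝕋) := by
  rw [AddCircle.intervalIntegral_preimage, lam, integral_smul_measure, ENNReal.toReal_inv,
    ENNReal.toReal_ofReal two_pi_pos.le, smul_eq_mul]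

theorem isProbabilityMeasure_lam : IsProbabilityMeasure lam where
  measure_univ := by
    rw [lam, Measure.smul_apply, AddCircle.measure_univ, smul_eq_mul]
    exact ENNReal.inv_mul_cancel (ENNReal.ofReal_pos.2 two_pi_pos).ne' ENNReal.ofReal_ne_top

theorem integral_withDensity_ofReal {g : 𝕋 → ℝ} (hg : Continuous g) (hg₀ : ∀ x, 0 ≤ g x)
    (Φ : 𝕋 → ℝ) :
    ∫ y, Φ y ∂lam.withDensity (fun y => ENNReal.ofReal (g y)) = ∫ y, g y * Φ y ∂lam := by
  rw [integral_withDensity_eq_integral_toReal_smul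
    hg.measurable.ennreal_ofReal (ae_of_all _ fun _ => ENNReal.ofReal_lt_top)]
  simp only [ENNReal.toReal_ofReal (hg₀ _), smul_eq_mul]

theorem dist_le_pi (x y : 𝕋) : dist x y ≤ π := by
  have h := AddCircle.norm_le_half_period (2 * π) (x := x - y) two_pi_pos.ne'
  rwa [← dist_eq_norm, abs_of_pos two_pi_pos, mul_div_cancel_left₀ _ two_ne_zero] at h

theorem norm_coe_of_mem_Icc {w : ℝ} (hw : w ∈ Icc 0 π) : ‖(w : 𝕋)‖ = w := by
  rw [(AddCircle.norm_coe_eq_abs_iff (2 * π) two_pi_pos.ne').2, abs_of_nonneg hw.1]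
  rw [abs_of_nonneg hw.1, abs_of_pos two_pi_pos]
  linarith [hw.2]

theorem dist_coe_coe_add (x : ℝ) {w : ℝ} (hw : w ∈ Icc 0 π) :
    dist (x : 𝕋) ((x + w : ℝ) : 𝕋) = w := by
  rw [dist_comm, dist_eq_norm, ← AddCircle.coe_sub, add_sub_cancel_left, norm_coe_of_mem_Icc hw]

theorem dist_coe_coe_sub (x : ℝ) {w : ℝ} (hw : w ∈ Icc 0 π) :
    dist (x : 𝕋) ((x - w : ℝ) : 𝕋) = w := by
  rw [dist_eq_norm, ← AddCircle.coe_sub, sub_sub_cancel, norm_coe_of_mem_Icc hw]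

theorem sgn_coe_coe_add (x : ℝ) {w : ℝ} (hw : w ∈ Icc 0 π) :
    sgn (x : 𝕋) ((x + w : ℝ) : 𝕋) = 1 := by
  rw [sgn, ← AddCircle.coe_sub, add_sub_cancel_left,
    rep_coe ⟨by linarith [hw.1, pi_pos], hw.2⟩, if_pos hw.1]

theorem sgn_coe_coe_sub (x : ℝ) {w : ℝ} (hw : w ∈ Ioo 0 π) :
    sgn (x : 𝕋) ((x - w : ℝ) : 𝕋) = -1 := by
  rw [sgn, ← AddCircle.coe_sub, sub_sub_cancel_left,
    rep_coe ⟨by linarith [hw.2], by linarith [hw.1, hw.2]⟩, if_neg (by linarith [hw.1])]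

end Circle

section LiftedDensity

/-- The density with respect to Lebesgue measure, on the real line, of the periodic lift of the
measure on the circle with density `g` with respect to `lam`. -/
def liftedDensity (g : 𝕋 → ℝ) (t : ℝ) : ℝ := (2 * π)⁻¹ * g (t : 𝕋)

variable {g : 𝕋 → ℝ} {p : ℝ}

theorem continuous_liftedDensity (hg : Continuous g) : Continuous (liftedDensity g) :=
  continuous_const.mul (hg.comp (AddCircle.continuous_mk' _))

theorem liftedDensity_periodic (g : 𝕋 → ℝ) : Function.Periodic (liftedDensity g) (2 * π) :=
  fun t => by rw [liftedDensity, AddCircle.coe_add_period, liftedDensity]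

theorem abs_liftedDensity_le {G : ℝ} (hg₀ : ∀ x, 0 ≤ g x) (hG : ∀ x, g x ≤ G) (t : ℝ) :
    |liftedDensity g t| ≤ (2 * π)⁻¹ * G := by
  rw [liftedDensity, abs_of_nonneg (mul_nonneg (by positivity) (hg₀ _))]
  exact mul_le_mul_of_nonneg_left (hG _) (by positivity)

theorem integral_withDensity_eq_integral_liftedDensity (hg : Continuous g) (hg₀ : ∀ x, 0 ≤ g x)
    {Φ : 𝕋 → ℝ} {φ₁ φ₂ : ℝ → ℝ} (hφ₁ : Continuous φ₁) (hφ₂ : Continuous φ₂) (x : ℝ)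
    (h₁ : ∀ w ∈ Ioo 0 π, Φ ((x + w : ℝ) : 𝕋) = φ₁ w)
    (h₂ : ∀ w ∈ Ioo 0 π, Φ ((x - w : ℝ) : 𝕋) = φ₂ w) :
    ∫ y, Φ y ∂lam.withDensity (fun y => ENNReal.ofReal (g y)) =
      ∫ w in (0 : ℝ)..π, (φ₁ w * liftedDensity g (x + w) + φ₂ w * liftedDensity g (x - w)) := by
  have hγ := continuous_liftedDensity hg
  have hshift := intervalIntegral.integral_comp_add_left (a := -π) (b := π)
    (fun t => g (t : 𝕋) * Φ (t : 𝕋)) x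
  have hend : x + -π + 2 * π = x + π := by ring
  rw [integral_withDensity_ofReal hg hg₀, integral_lam _ (x + -π), hend, ← hshift,
    ← intervalIntegral.integral_const_mul]
  refine integral_symm_eq_add pi_pos.le
    ((hφ₁.mul (hγ.comp (continuous_const_add x))).intervalIntegrable _ _)
    ((hφ₂.mul (hγ.comp (continuous_sub_left x))).intervalIntegrable _ _)
    (fun w hw => ?_) fun w hw => ?_
  · simp only [liftedDensity, h₁ w hw]
    ring
  · simp only [liftedDensity, ← sub_eq_add_neg, h₂ w hw]
    ring

theorem Up_coe (hg : Continuous g) (hg₀ : ∀ x, 0 ≤ g x) (hp : 0 ≤ p) (x : ℝ) :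
    Up p (lam.withDensity fun y => ENNReal.ofReal (g y)) (x : 𝕋) =
      radialPotential (· ^ p) (liftedDensity g) π x := by
  have hpow : Continuous fun w : ℝ => w ^ p := Real.continuous_rpow_const hp
  rw [Up, integral_withDensity_eq_integral_liftedDensity hg hg₀ hpow hpow x
    (fun w hw => by rw [dist_coe_coe_add x (Ioo_subset_Icc_self hw)])
    (fun w hw => by rw [dist_coe_coe_sub x (Ioo_subset_Icc_self hw)])]
  simp only [radialPotential, mul_add]

theorem continuous_Up (hg : Continuous g) (hg₀ : ∀ x, 0 ≤ g x) (hp : 0 ≤ p) :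
    Continuous (Up p (lam.withDensity fun y => ENNReal.ofReal (g y))) := by
  refine (QuotientAddGroup.isQuotientMap_mk _).continuous_iff.2 ?_
  exact (continuous_radialPotential (Real.continuous_rpow_const hp) (continuous_liftedDensity hg)
    π).congr fun x => (Up_coe hg hg₀ hp x).symm

theorem genp_coe (hg : Continuous g) (hg₀ : ∀ x, 0 ≤ g x) (hp : 1 ≤ p) (α β : ℝ) {f : ℝ → ℝ}
    (hf : Continuous f) (hfT : Function.Periodic f (2 * π)) (x : ℝ) :
    genp p (lam.withDensity fun y => ENNReal.ofReal (g y)) α β f (x : 𝕋) =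
      jumpGenerator (fun w => α * β / 2 * (p * w ^ (p - 1))) (liftedDensity g) π α f x := by
  have hs : Continuous fun w : ℝ => α * β / 2 * (p * w ^ (p - 1)) :=
    continuous_const.mul (continuous_const.mul (Real.continuous_rpow_const (sub_nonneg.2 hp)))
  have hf_rep : ∀ v, f (rep (x : 𝕋) + v) = f (x + v) := fun v =>
    apply_rep_coe (F := fun t => f (t + v)) (fun t => by simp only [add_right_comm t, hfT _]) x
  rw [genp, jumpGenerator, apply_rep_coe (periodic_deriv (periodic_deriv hfT)),
    apply_rep_coe hfT]
  simp only [hf_rep]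
  rw [integral_withDensity_eq_integral_liftedDensity hg hg₀
    (φ₁ := fun w => f (x + α * β / 2 * (p * w ^ (p - 1))) - f x)
    (φ₂ := fun w => f (x - α * β / 2 * (p * w ^ (p - 1))) - f x)
    ((hf.comp (continuous_const.add hs)).sub continuous_const)
    ((hf.comp (continuous_const.sub hs)).sub continuous_const) x]
  · intro w hw
    rw [dist_coe_coe_add x (Ioo_subset_Icc_self hw), sgn_coe_coe_add x (Ioo_subset_Icc_self hw)]
    ring_nf
  · intro w hw
    rw [dist_coe_coe_sub x (Ioo_subset_Icc_self hw), sgn_coe_coe_sub x hw]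
    ring_nf

theorem integral_gibbsp {ν : Measure 𝕋} (hU : Continuous (Up p ν)) (β : ℝ) (Ψ : 𝕋 → ℝ) :
    ∫ z, Ψ z ∂gibbsp p ν β = (2 * π)⁻¹ * (Zp p ν β)⁻¹ *
      ∫ x in (0 : ℝ)..2 * π, Ψ (x : 𝕋) * exp (-β * Up p ν (x : 𝕋)) := by
  have hZ : 0 ≤ Zp p ν β := integral_nonneg fun _ => (exp_pos _).le
  have hdensity := integral_withDensity_ofReal
    (((continuous_const.fun_mul hU).rexp).div_const (Zp p ν β))
    (fun x => div_nonneg (exp_pos (-β * Up p ν x)).le hZ) Ψ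
  rw [gibbsp, hdensity, integral_lam _ 0, zero_add, mul_assoc (2 * π)⁻¹,
    ← intervalIntegral.integral_const_mul (Zp p ν β)⁻¹]
  congr 1
  exact intervalIntegral.integral_congr fun x _ => by ring

end LiftedDensity

section HolderDensity

theorem continuous_of_abs_sub_le_mul_dist_rpow {X : Type*} [PseudoMetricSpace X] {g : X → ℝ}
    {A a : ℝ} (ha : 0 < a) (hg : ∀ x y, |g x - g y| ≤ A * dist x y ^ a) : Continuous g := by
  refine continuous_iff_continuousAt.2 fun x => tendsto_iff_dist_tendsto_zero.2 ?_
  have hlim : Tendsto (fun y => A * dist y x ^ a) (nhds x) (nhds 0) := by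
    have hcont : Continuous fun y => A * dist y x ^ a :=
      continuous_const.mul
        ((Real.continuous_rpow_const ha.le).comp (continuous_id.dist continuous_const))
    simpa only [dist_self, Real.zero_rpow ha.ne', mul_zero] using hcont.tendsto x
  exact squeeze_zero (fun _ => dist_nonneg) (fun y => hg y x) hlim

theorem density_le_one_add_mul_pi {g : 𝕋 → ℝ} {A a : ℝ} (hA : 0 ≤ A) (ha : 0 < a) (ha₁ : a ≤ 1)
    (hg₀ : ∀ x, 0 ≤ g x) (hg : ∀ x y, |g x - g y| ≤ A * dist x y ^ a)
    [IsProbabilityMeasure (lam.withDensity fun y => ENNReal.ofReal (g y))] (x : 𝕋) :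
    g x ≤ 1 + A * π := by
  have : IsProbabilityMeasure lam := isProbabilityMeasure_lam
  have hg_cont := continuous_of_abs_sub_le_mul_dist_rpow ha hg
  have hmass : ∫ y, g y ∂lam = 1 := by
    simpa using (integral_withDensity_ofReal hg_cont hg₀ fun _ => 1).symm
  obtain ⟨y, hy⟩ := exists_le_integral
    (hg_cont.integrable_of_hasCompactSupport (HasCompactSupport.of_compactSpace g) (μ := lam))
  have hdist : dist x y ^ a ≤ π := by
    calc dist x y ^ a ≤ π ^ a := Real.rpow_le_rpow dist_nonneg (dist_le_pi x y) ha.le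
      _ ≤ π ^ (1 : ℝ) := Real.rpow_le_rpow_of_exponent_le (by linarith [pi_gt_three]) ha₁
      _ = π := Real.rpow_one π
  have hosc := (le_abs_self _).trans (hg x y)
  linarith [mul_le_mul_of_nonneg_left hdist hA]

end HolderDensity

theorem mul_sq_mul_one_add_le_rpow_ta (p : ℝ) {α β : ℝ} (hα : 0 < α) (hα₁ : α ≤ 1)
    (hβ : 1 ≤ β) : α * β ^ 2 * (1 + β) ≤ 2 * (α ^ ta p * β ^ 3) := by
  have hta : ta p ≤ 1 := by
    unfold ta
    split_ifs with h
    · exact le_rfl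
    · linarith [not_le.1 (not_or.1 h).2]
  have hpow : α ≤ α ^ ta p := by
    simpa only [Real.rpow_one] using Real.rpow_le_rpow_of_exponent_ge hα hα₁ hta
  calc α * β ^ 2 * (1 + β) ≤ α * β ^ 2 * (2 * β) := by gcongr; linarith
    _ = 2 * (α * β ^ 3) := by ring
    _ ≤ 2 * (α ^ ta p * β ^ 3) := by gcongr

theorem dirichlet_form_perturbation_estimate_general (p : ℝ) (hp : 1 ≤ p) (σ : ℝ) {G : ℝ}
    (hG : 0 < G) :
    ∃ C : ℝ, 0 < C ∧ ∀ g : 𝕋 → ℝ, Continuous g → (∀ x, 0 ≤ g x) → (∀ x, g x ≤ G) →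
      ∀ ν : Measure 𝕋, ν = lam.withDensity (fun y => ENNReal.ofReal (g y)) →
      ∀ α β : ℝ, 0 < α → 0 ≤ β → α * β ^ 2 ≤ σ →
      ∀ f : ℝ → ℝ, Function.Periodic f (2 * π) → ContDiff ℝ 2 f →
        ∫ z, genp p ν α β f z * f (rep z) ∂gibbsp p ν β ≤
          -(1 / 2) * (∫ z, deriv f (rep z) ^ 2 ∂gibbsp p ν β) +
            C * (α * β ^ 2 * (1 + β)) *
              ((∫ z, deriv f (rep z) ^ 2 ∂gibbsp p ν β) + ∫ z, f (rep z) ^ 2 ∂gibbsp p ν β) := by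
  have hG' : 0 < (2 * π)⁻¹ * G := mul_pos (inv_pos.2 two_pi_pos) hG
  obtain ⟨C, hC, hcore⟩ := exists_integral_jumpGenerator_rpow_mul_le hp pi_pos hG' σ
  refine ⟨C, hC, ?_⟩
  rintro g hg hg₀ hgG ν rfl α β hα hβ hσ f hfT hf
  have hp₀ : 0 ≤ p := zero_le_one.trans hp
  have hf₁ : ContDiff ℝ 1 f := hf.of_le one_le_two
  set γ := liftedDensity g
  set ν := lam.withDensity fun y => ENNReal.ofReal (g y)
  have hU : Continuous (Up p ν) := continuous_Up hg hg₀ hp₀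
  have hγ : Continuous γ := continuous_liftedDensity hg
  have hexp : Continuous fun x => exp (-β * radialPotential (· ^ p) γ π x) :=
    (continuous_const.mul
      (continuous_radialPotential (Real.continuous_rpow_const hp₀) hγ π)).rexp
  have hbound := hcore γ hγ (liftedDensity_periodic g)
    (abs_liftedDensity_le hg₀ hgG) α β hα hβ hσ f hf hfT
  simp only [sobolevDensity, add_mul] at hbound
  rw [intervalIntegral.integral_add
    (((hf₁.continuous_deriv_one.fun_pow 2).fun_mul hexp).intervalIntegrable _ _)
    (((hf₁.continuous.fun_pow 2).fun_mul hexp).intervalIntegrable _ _)] at hbound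
  have hK : 0 ≤ (2 * π)⁻¹ * (Zp p ν β)⁻¹ := mul_nonneg (inv_nonneg.2 two_pi_pos.le)
    (inv_nonneg.2 (integral_nonneg fun _ => (exp_pos _).le))
  simp only [integral_gibbsp hU, ν, genp_coe hg hg₀ hp α β hf.continuous hfT, apply_rep_coe hfT,
    apply_rep_coe (periodic_deriv hfT), Up_coe hg hg₀ hp₀, mul_assoc (jumpGenerator _ _ _ _ _ _)]
  linarith [mul_le_mul_of_nonneg_left hbound hK]

/-- Lemma `Lffm`: for `p ≥ 1` and a Hölder density, there are constants
`σ̃ ∈ (0,1/2)` (depending only on `p`) and `c₃ > 0` (depending only on `p` and `A`) such that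
for `α > 0`, `β ≥ 1` with `αβ² ≤ σ̃` and any `C²` function `f` on the circle,
`∫ L_{α,β}[f-1](f-1) dμ_β
   ≤ -(1/2 - c₃ α^{ã(p)} β³) ∫ (f')² dμ_β + c₃ α^{ã(p)} β³ ∫ (f-1)² dμ_β`. -/
theorem dirichlet_form_perturbation_estimate (p : ℝ) (hp : 1 ≤ p) :
    ∃ σ' : ℝ, 0 < σ' ∧ σ' < 1 / 2 ∧
      ∀ (A : ℝ), 0 < A →
      ∃ c₃ : ℝ, 0 < c₃ ∧
        ∀ (a : ℝ), 0 < a → a ≤ 1 →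
        ∀ (g : 𝕋 → ℝ) (ν : Measure 𝕋), IsProbabilityMeasure ν →
          ν = lam.withDensity (fun y => ENNReal.ofReal (g y)) →
          (∀ x, 0 ≤ g x) →
          (∀ x y : 𝕋, |g x - g y| ≤ A * dist x y ^ a) →
        ∀ (α β : ℝ), 0 < α → 1 ≤ β → α * β ^ 2 ≤ σ' →
        ∀ f : ℝ → ℝ, Function.Periodic f (2 * π) → ContDiff ℝ 2 f →
          (∫ z, genp p ν α β (fun t => f t - 1) z * (f (rep z) - 1) ∂(gibbsp p ν β))
            ≤ -(1 / 2 - c₃ * α ^ ta p * β ^ 3) *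
                  (∫ z, (deriv f (rep z)) ^ 2 ∂(gibbsp p ν β))
                + c₃ * α ^ ta p * β ^ 3 *
                  ∫ z, (f (rep z) - 1) ^ 2 ∂(gibbsp p ν β) := by
  refine ⟨1 / 4, by norm_num, by norm_num, fun A hA => ?_⟩
  obtain ⟨C, hC, hgeneral⟩ := dirichlet_form_perturbation_estimate_general p hp (1 / 4)
    (G := 1 + A * π) (by positivity)
  refine ⟨2 * C, by positivity, ?_⟩
  rintro a ha ha₁ g ν hν rfl hg₀ hg α β hα hβ hσ f hfT hf
  have hestimate := hgeneral g (continuous_of_abs_sub_le_mul_dist_rpow ha hg) hg₀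
    (density_le_one_add_mul_pi hA.le ha ha₁ hg₀ hg) _ rfl α β hα (by linarith) hσ (fun t => f t - 1)
    (fun x => by simp only [hfT x]) (hf.sub contDiff_const)
  simp only [deriv_sub_const_fun] at hestimate
  have hα₁ : α ≤ 1 := by nlinarith
  have hscale := mul_sq_mul_one_add_le_rpow_ta p hα hα₁ hβ
  set D := ∫ z, deriv f (rep z) ^ 2 ∂gibbsp p _ β
  set M := ∫ z, (f (rep z) - 1) ^ 2 ∂gibbsp p _ β
  have hDM : 0 ≤ D + M := add_nonneg (integral_nonneg fun _ => sq_nonneg _)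
    (integral_nonneg fun _ => sq_nonneg _)
  linarith [mul_le_mul_of_nonneg_right (mul_le_mul_of_nonneg_left hscale hC.le) hDM]
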